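/- arXiv:0806.0681 — 2 statements merged into one kernel-verified Lean document; each statement's English description precedes it below -/
import Mathlib

section
/- For n ≥ 2, the number p_n of automorphisms of 𝔽_q[x,y] of degree n satisfies (q−1)³(q+1)²q^(n+1) ≤ p_n ≤ (q−1)³(q+1)²q^(n+1) + (log₂ n)^(log₂ n) · q^(n/2+8). -/
open MvPolynomial

/-- The degree of an automorphism `φ = (f, g)` of `K[x,y]`: `max(deg f, deg g)`. -/
noncomputable def autDeg {K : Type*} [CommSemiring K]
    (φ : MvPolynomial (Fin 2) K ≃ₐ[K] MvPolynomial (Fin 2) K) : ℕ :=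
  max (φ (X 0)).totalDegree (φ (X 1)).totalDegree

section LeadingForms

variable {K σ τ : Type*} [Field K]

/-- `P'` is the component of weight `m` of `P`, all other monomials of `P` having smaller weight. -/
def IsTopForm (w : σ → ℚ) (m : ℚ) (P P' : MvPolynomial σ K) : Prop :=
  IsWeightedHomogeneous w P' m ∧ ∀ d, coeff d (P - P') ≠ 0 → Finsupp.weight w d < m

variable {w : σ → ℚ} {m n : ℚ} {P P' Q Q' : MvPolynomial σ K}

theorem IsTopForm.weight_le (h : IsTopForm w m P P') {d : σ →₀ ℕ} (hd : coeff d P ≠ 0) :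
    Finsupp.weight w d ≤ m := by
  by_cases h' : coeff d P' = 0
  · exact (h.2 d (by simpa [h'] using hd)).le
  · exact (h.1 h').le

theorem IsTopForm.of_homogeneous (h : IsWeightedHomogeneous w P m) : IsTopForm w m P P :=
  ⟨h, fun d hd => absurd (by simp) hd⟩

theorem IsTopForm.of_lt (h : ∀ d, coeff d P ≠ 0 → Finsupp.weight w d < m) : IsTopForm w m P 0 :=
  ⟨isWeightedHomogeneous_zero K w m, by simpa using h⟩

theorem IsTopForm.of_le (h : ∀ d, coeff d P ≠ 0 → Finsupp.weight w d ≤ m) :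
    IsTopForm w m P (weightedHomogeneousComponent w m P) := by
  refine ⟨weightedHomogeneousComponent_isWeightedHomogeneous m P, fun d hd => ?_⟩
  rw [coeff_sub, coeff_weightedHomogeneousComponent] at hd
  split_ifs at hd with h1
  · simp at hd
  · exact lt_of_le_of_ne (h d (by simpa using hd)) h1

theorem IsTopForm.unique (h : IsTopForm w m P Q) (h' : IsTopForm w m P Q') : Q = Q' := by
  ext d
  by_contra hne
  have hw : Finsupp.weight w d = m := by
    by_cases h0 : coeff d Q = 0
    · exact h'.1 (fun h1 => hne (h0.trans h1.symm))
    · exact h.1 h0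
  have h1 : coeff d (P - Q) = 0 := by
    by_contra h1; exact (h.2 d h1).ne hw
  have h2 : coeff d (P - Q') = 0 := by
    by_contra h2; exact (h'.2 d h2).ne hw
  rw [coeff_sub] at h1 h2
  exact hne (by linear_combination h2 - h1)

theorem IsTopForm.add (h : IsTopForm w m P P') (h' : IsTopForm w m Q Q') :
    IsTopForm w m (P + Q) (P' + Q') := by
  refine ⟨h.1.add h'.1, fun d hd => ?_⟩
  have e : P + Q - (P' + Q') = (P - P') + (Q - Q') := by ring
  rw [e, coeff_add] at hd
  by_cases h0 : coeff d (P - P') = 0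
  · exact h'.2 d (fun h1 => hd (by simp [h0, h1]))
  · exact h.2 d h0

theorem IsTopForm.sum {ι : Type*} (s : Finset ι) {f g : ι → MvPolynomial σ K}
    (h : ∀ i ∈ s, IsTopForm w m (f i) (g i)) : IsTopForm w m (∑ i ∈ s, f i) (∑ i ∈ s, g i) := by
  classical
  induction s using Finset.induction_on with
  | empty => simpa using IsTopForm.of_homogeneous (isWeightedHomogeneous_zero K w m)
  | insert a s ha ih =>
    rw [Finset.sum_insert ha, Finset.sum_insert ha]
    exact (h a (by simp)).add (ih fun i hi => h i (by simp [hi]))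

theorem exists_coeff_ne_zero_of_coeff_mul_ne_zero {d : σ →₀ ℕ} (hd : coeff d (P * Q) ≠ 0) :
    ∃ a b, a + b = d ∧ coeff a P ≠ 0 ∧ coeff b Q ≠ 0 := by
  classical
  rw [coeff_mul] at hd
  obtain ⟨x, hx, hx0⟩ := Finset.exists_ne_zero_of_sum_ne_zero hd
  exact ⟨x.1, x.2, by simpa using hx, left_ne_zero_of_mul hx0, right_ne_zero_of_mul hx0⟩

theorem IsTopForm.mul (h : IsTopForm w m P P') (h' : IsTopForm w n Q Q') :
    IsTopForm w (m + n) (P * Q) (P' * Q') := by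
  refine ⟨h.1.mul h'.1, fun d hd => ?_⟩
  have e : P * Q - P' * Q' = (P - P') * Q + P' * (Q - Q') := by ring
  rw [e, coeff_add] at hd
  by_cases h0 : coeff d ((P - P') * Q) = 0
  · rw [h0, zero_add] at hd
    obtain ⟨a, b, rfl, ha, hb⟩ := exists_coeff_ne_zero_of_coeff_mul_ne_zero hd
    rw [map_add, h.1 ha]
    have := h'.2 b hb
    linarith
  · obtain ⟨a, b, rfl, ha, hb⟩ := exists_coeff_ne_zero_of_coeff_mul_ne_zero h0
    rw [map_add]
    have := h'.weight_le hb
    have := h.2 a ha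
    linarith

theorem IsTopForm.pow (h : IsTopForm w m P P') (k : ℕ) :
    IsTopForm w (k * m) (P ^ k) (P' ^ k) := by
  induction k with
  | zero => simpa using IsTopForm.of_homogeneous (isWeightedHomogeneous_one K w)
  | succ k ih =>
    have := ih.mul h
    rw [pow_succ, pow_succ]
    convert this using 1
    push_cast; ring

theorem IsTopForm.C_mul (h : IsTopForm w m P P') (c : K) :
    IsTopForm w m (C c * P) (C c * P') := by
  simpa using (IsTopForm.of_homogeneous (isWeightedHomogeneous_C w c)).mul h

theorem IsTopForm.prod {ι : Type*} (s : Finset ι) {f g : ι → MvPolynomial σ K} {r : ι → ℚ}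
    (h : ∀ i ∈ s, IsTopForm w (r i) (f i) (g i)) :
    IsTopForm w (∑ i ∈ s, r i) (∏ i ∈ s, f i) (∏ i ∈ s, g i) := by
  classical
  induction s using Finset.induction_on with
  | empty => simpa using IsTopForm.of_homogeneous (isWeightedHomogeneous_one K w)
  | insert a s ha ih =>
    rw [Finset.prod_insert ha, Finset.prod_insert ha, Finset.sum_insert ha]
    exact (h a (by simp)).mul (ih fun i hi => h i (by simp [hi]))

theorem IsTopForm.aeval_monomial {v : τ → ℚ} {A A' : τ → MvPolynomial σ K}
    (h : ∀ t, IsTopForm w (v t) (A t) (A' t)) (d : τ →₀ ℕ) (c : K) :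
    IsTopForm w (Finsupp.weight v d) (aeval A (monomial d c)) (aeval A' (monomial d c)) := by
  simp only [MvPolynomial.aeval_monomial, algebraMap_eq]
  refine IsTopForm.C_mul ?_ c
  have := IsTopForm.prod d.support (r := fun t => (d t : ℚ) * v t) (fun t _ => (h t).pow (d t))
  simpa [Finsupp.weight_apply, Finsupp.sum, Finsupp.prod] using this

theorem IsTopForm.aeval {v : τ → ℚ} {A A' : τ → MvPolynomial σ K}
    (h : ∀ t, IsTopForm w (v t) (A t) (A' t)) {F F' : MvPolynomial τ K}
    (hF : IsTopForm v m F F') : IsTopForm w m (aeval A F) (aeval A' F') := by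
  have h1 : IsTopForm w m (MvPolynomial.aeval A F') (MvPolynomial.aeval A' F') := by
    rw [F'.as_sum, map_sum, map_sum]
    refine IsTopForm.sum _ fun d hd => ?_
    rw [← hF.1 (mem_support_iff.1 hd)]
    exact IsTopForm.aeval_monomial h d _
  have h2 : IsTopForm w m (MvPolynomial.aeval A (F - F')) 0 := by
    rw [(F - F').as_sum, map_sum]
    have := IsTopForm.sum (w := w) (m := m) (F - F').support
      (f := fun d => MvPolynomial.aeval A (monomial d (coeff d (F - F')))) (g := fun _ => 0) ?_
    · simpa using this
    · intro d hd
      refine IsTopForm.of_lt fun e he => ?_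
      exact ((IsTopForm.aeval_monomial h d _).weight_le he).trans_lt (hF.2 d (mem_support_iff.1 hd))
  simpa using h1.add h2

theorem exists_isTopForm (w : σ → ℚ) (hP : P ≠ 0) : ∃ (d : σ →₀ ℕ) (P' : MvPolynomial σ K),
    coeff d P ≠ 0 ∧ P' ≠ 0 ∧ IsTopForm w (Finsupp.weight w d) P P' := by
  obtain ⟨d, hd, hmax⟩ := P.support.exists_max_image (Finsupp.weight w)
    (Finset.nonempty_of_ne_empty (by simpa using hP))
  refine ⟨d, _, by simpa using hd, fun h0 => ?_,
    IsTopForm.of_le fun e he => hmax e (mem_support_iff.2 he)⟩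
  have := congrArg (coeff d) h0
  rw [coeff_weightedHomogeneousComponent, if_pos rfl] at this
  exact mem_support_iff.1 hd (by simpa using this)

theorem weight_one_eq (d : σ →₀ ℕ) : Finsupp.weight (fun _ => (1 : ℚ)) d = (d.degree : ℚ) := by
  simp [Finsupp.weight_apply, Finsupp.sum, Finsupp.degree_apply]

theorem IsTopForm.totalDegree_eq (h : IsTopForm (fun _ => 1) m P P') (h0 : P' ≠ 0) :
    (P.totalDegree : ℚ) = m := by
  obtain ⟨d, hd⟩ := MvPolynomial.ne_zero_iff.1 h0
  have hdm := h.1 hd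
  have hP : coeff d P ≠ 0 := by
    intro h1
    exact (h.2 d (by simpa [h1] using hd)).ne hdm
  have hP0 : P ≠ 0 := by rintro rfl; simp at hP
  apply le_antisymm
  · obtain ⟨e, he, hee⟩ := Finset.exists_mem_eq_sup P.support
      (Finset.nonempty_of_ne_empty (by simpa using hP0)) (fun s => s.sum fun _ e => e)
    rw [MvPolynomial.totalDegree, hee]
    have := h.weight_le (mem_support_iff.1 he)
    rw [weight_one_eq] at this
    exact this
  · rw [← hdm, weight_one_eq]
    exact_mod_cast le_totalDegree (mem_support_iff.2 hP)

theorem IsTopForm.totalDegree_lt (h : IsTopForm (fun _ => 1) m P 0) (hm : 0 < m) :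
    (P.totalDegree : ℚ) < m := by
  by_cases hP0 : P = 0
  · simpa [hP0] using hm
  obtain ⟨e, he, hee⟩ := Finset.exists_mem_eq_sup P.support
    (Finset.nonempty_of_ne_empty (by simpa using hP0)) (fun s => s.sum fun _ e => e)
  rw [MvPolynomial.totalDegree, hee]
  have := h.2 e (by simpa using mem_support_iff.1 he)
  rw [weight_one_eq] at this
  exact this

theorem exists_isTopForm_totalDegree (hP : P ≠ 0) : ∃ P' : MvPolynomial σ K,
    P' ≠ 0 ∧ IsTopForm (fun _ => 1) (P.totalDegree : ℚ) P P' := by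
  obtain ⟨d, P', -, h0, h⟩ := exists_isTopForm (fun _ => 1) hP
  refine ⟨P', h0, ?_⟩
  rwa [h.totalDegree_eq h0]

end LeadingForms

section Cusp

/-- Nonconstant solutions of `A ^ i - c B ^ j = H` with `H` a nonzero constant do not exist over a
field in which `i, j ≥ 2` are invertible. -/
theorem natDegree_eq_zero_of_pow_sub_pow_eq_C {L : Type*} [Field L] (p : ℕ) [Fact p.Prime]
    [CharP L p] {i j : ℕ} (hi : 2 ≤ i) (hj : 2 ≤ j) (hi0 : (i : L) ≠ 0) (hj0 : (j : L) ≠ 0)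
    {c H : L} (hc : c ≠ 0) (hH : H ≠ 0) {A B : Polynomial L}
    (h : A ^ i - Polynomial.C c * B ^ j = Polynomial.C H) :
    A.natDegree = 0 ∧ B.natDegree = 0 := by
  have hp := (Fact.out : p.Prime)
  induction hN : A.natDegree + B.natDegree using Nat.strong_induction_on generalizing A B with
  | _ N ih =>
  have hcop : IsCoprime (A ^ (i - 1)) (B ^ (j - 1)) := by
    refine IsCoprime.pow ?_
    refine ⟨Polynomial.C H⁻¹ * A ^ (i - 1), - Polynomial.C H⁻¹ * Polynomial.C c * B ^ (j - 1), ?_⟩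
    have h1 : A ^ (i - 1) * A = A ^ i := by rw [← pow_succ]; congr 1; omega
    have h2 : B ^ (j - 1) * B = B ^ j := by rw [← pow_succ]; congr 1; omega
    have h3 : Polynomial.C H⁻¹ * Polynomial.C H = 1 := by
      rw [← Polynomial.C_mul, inv_mul_cancel₀ hH, Polynomial.C_1]
    linear_combination Polynomial.C H⁻¹ * h1 - Polynomial.C H⁻¹ * Polynomial.C c * h2
      + Polynomial.C H⁻¹ * h + h3
  have hder : Polynomial.C (i : L) * A ^ (i - 1) * Polynomial.derivative A
      = Polynomial.C c * (Polynomial.C (j : L) * B ^ (j - 1) * Polynomial.derivative B) := by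
    have := congrArg Polynomial.derivative h
    simp only [Polynomial.derivative_sub, Polynomial.derivative_C_mul, Polynomial.derivative_C,
      Polynomial.derivative_pow] at this
    exact sub_eq_zero.1 this
  have hdA : A ^ (i - 1) ∣ Polynomial.derivative B := by
    have h1 : A ^ (i - 1) ∣ B ^ (j - 1) * Polynomial.derivative B := by
      refine ⟨Polynomial.C (c * j)⁻¹ * Polynomial.C (i : L) * Polynomial.derivative A, ?_⟩
      have h3 : Polynomial.C (c * j)⁻¹ * (Polynomial.C c * Polynomial.C (j : L)) = 1 := by
        rw [← Polynomial.C_mul, ← Polynomial.C_mul, inv_mul_cancel₀ (mul_ne_zero hc hj0),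
          Polynomial.C_1]
      linear_combination (-Polynomial.C (c * j)⁻¹) * hder
        - B ^ (j - 1) * Polynomial.derivative B * h3
    exact hcop.dvd_of_dvd_mul_left h1
  have hdB : B ^ (j - 1) ∣ Polynomial.derivative A := by
    have h1 : B ^ (j - 1) ∣ A ^ (i - 1) * Polynomial.derivative A := by
      refine ⟨Polynomial.C (i : L)⁻¹ * Polynomial.C c * Polynomial.C (j : L)
        * Polynomial.derivative B, ?_⟩
      have h3 : Polynomial.C (i : L)⁻¹ * Polynomial.C (i : L) = 1 := by
        rw [← Polynomial.C_mul, inv_mul_cancel₀ hi0, Polynomial.C_1]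
      linear_combination (Polynomial.C (i : L)⁻¹) * hder
        - A ^ (i - 1) * Polynomial.derivative A * h3
    exact hcop.symm.dvd_of_dvd_mul_left h1
  have key : ∀ {P Q : Polynomial L} {k : ℕ}, 2 ≤ k → Polynomial.derivative Q ≠ 0 →
      P ^ (k - 1) ∣ Polynomial.derivative Q → P.natDegree < Q.natDegree := by
    intro P Q k hk hQ hd
    have h1 := Polynomial.natDegree_le_of_dvd hd hQ
    rw [Polynomial.natDegree_pow] at h1
    have h2 : Q.natDegree ≠ 0 := fun h0 => hQ (by
      rw [Polynomial.eq_C_of_natDegree_eq_zero h0, Polynomial.derivative_C])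
    have h3 := Polynomial.natDegree_derivative_lt h2
    have h4 : 1 * P.natDegree ≤ (k - 1) * P.natDegree := Nat.mul_le_mul_right _ (by omega)
    omega
  by_cases hA' : Polynomial.derivative A = 0 <;> by_cases hB' : Polynomial.derivative B = 0
  · have eA := Polynomial.expand_contract p hA' hp.ne_zero
    have eB := Polynomial.expand_contract p hB' hp.ne_zero
    have h1 : (Polynomial.contract p A) ^ i - Polynomial.C c * (Polynomial.contract p B) ^ j
        = Polynomial.C H := by
      apply Polynomial.expand_injective hp.pos
      rw [map_sub, map_mul, map_pow, map_pow, eA, eB, Polynomial.expand_C, Polynomial.expand_C, h]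
    have dA := congrArg Polynomial.natDegree eA
    have dB := congrArg Polynomial.natDegree eB
    rw [Polynomial.natDegree_expand] at dA dB
    by_cases h0 : N = 0
    · omega
    have h2 : (Polynomial.contract p A).natDegree + (Polynomial.contract p B).natDegree < N := by
      rw [← hN, ← dA, ← dB, ← add_mul]
      refine lt_mul_of_one_lt_right ?_ hp.one_lt
      by_contra h3
      push Not at h3
      have h4 : (Polynomial.contract p A).natDegree = 0 := by omega
      have h5 : (Polynomial.contract p B).natDegree = 0 := by omega
      rw [h4] at dA; rw [h5] at dB; omega
    obtain ⟨h3, h4⟩ := ih _ h2 h1 rfl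
    rw [h3] at dA; rw [h4] at dB; omega
  · exfalso
    have h1 := key hi hB' hdA
    rw [hA'] at hder
    have h3 : Polynomial.C c * (Polynomial.C (j : L) * B ^ (j - 1) * Polynomial.derivative B) ≠ 0 := by
      have hB0 : B ≠ 0 := by rintro rfl; simp at hB'
      exact mul_ne_zero (Polynomial.C_ne_zero.2 hc) (mul_ne_zero (mul_ne_zero
        (Polynomial.C_ne_zero.2 hj0) (pow_ne_zero _ hB0)) hB')
    exact h3 (by rw [← hder]; simp)
  · exfalso
    rw [hB'] at hder
    have h3 : Polynomial.C (i : L) * A ^ (i - 1) * Polynomial.derivative A ≠ 0 := by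
      have hA0 : A ≠ 0 := by rintro rfl; simp at hA'
      exact mul_ne_zero (mul_ne_zero (Polynomial.C_ne_zero.2 hi0) (pow_ne_zero _ hA0)) hA'
    exact h3 (by rw [hder]; simp)
  · have h1 := key hi hB' hdA
    have h2 := key hj hA' hdB
    omega

variable {K : Type*} [Field K]

theorem optionEquivLeft_natDegree_eq_zero_of_dvd {P Q : MvPolynomial (Option (Fin 2)) K}
    (h : P ∣ Q) (hQ : Q ≠ 0) (hd : (optionEquivLeft K (Fin 2) Q).natDegree = 0) :
    (optionEquivLeft K (Fin 2) P).natDegree = 0 := by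
  have h1 := Polynomial.natDegree_le_of_dvd (map_dvd (optionEquivLeft K (Fin 2)) h)
    ((map_ne_zero_iff _ (optionEquivLeft K (Fin 2)).injective).2 hQ)
  omega

theorem X_pow_sub_C_mul_X_pow_ne_zero {i j : ℕ} (hi : i ≠ 0) {c : K} :
    (X 0 ^ i - C c * X 1 ^ j : MvPolynomial (Fin 2) K) ≠ 0 := by
  intro h
  have := congrArg (coeff (Finsupp.single 0 i)) h
  rw [coeff_sub, coeff_C_mul, coeff_X_pow, coeff_X_pow, if_pos rfl, if_neg] at this
  · simp at this
  · intro h1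
    have := DFunLike.congr_fun h1 0
    simp at this
    exact hi this.symm

theorem cusp_aux (p : ℕ) [Fact p.Prime] [CharP K p] {i j : ℕ} (hi : 2 ≤ i) (hj : 2 ≤ j)
    (hp : (i : K) = 0) (hj0 : (j : K) ≠ 0) {c : K} (hc : c ≠ 0) {u v : Fin 2}
    {A B : MvPolynomial (Option (Fin 2)) K}
    (h : A ^ i - C c * B ^ j = X (some u) ^ i - C c * X (some v) ^ j) :
    (optionEquivLeft K (Fin 2) A).natDegree = 0 ∧ (optionEquivLeft K (Fin 2) B).natDegree = 0 := by
  have hB : (optionEquivLeft K (Fin 2) B).natDegree = 0 := by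
    have h1 := congrArg (pderiv (some v)) h
    simp only [map_sub, Derivation.leibniz, Derivation.leibniz_pow, pderiv_C, mul_zero, add_zero,
      pderiv_X_self, nsmul_eq_mul, smul_eq_mul, mul_one] at h1
    rw [← map_natCast (C : K →+* MvPolynomial (Option (Fin 2)) K) i, hp,
      ← map_natCast (C : K →+* MvPolynomial (Option (Fin 2)) K) j] at h1
    simp only [C_0, zero_mul, zero_sub, neg_inj] at h1
    have hc' : (C c : MvPolynomial (Option (Fin 2)) K) ≠ 0 := by simpa using hc
    have hj' : (C (j : K) : MvPolynomial (Option (Fin 2)) K) ≠ 0 :=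
      (map_ne_zero_iff _ (C_injective _ _)).2 hj0
    have h2 := mul_left_cancel₀ hj' (mul_left_cancel₀ hc' h1)
    refine optionEquivLeft_natDegree_eq_zero_of_dvd (Q := X (some v) ^ (j - 1)) ?_ ?_ ?_
    · rw [← h2]
      exact Dvd.dvd.mul_right (dvd_pow_self B (by omega)) _
    · exact pow_ne_zero _ (X_ne_zero _)
    · rw [map_pow, optionEquivLeft_X_some, Polynomial.natDegree_pow]; simp
  refine ⟨?_, hB⟩
  have h1 : A ^ i = X (some u) ^ i - C c * X (some v) ^ j + C c * B ^ j := by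
    linear_combination h
  have h2 := congrArg (fun P => (optionEquivLeft K (Fin 2) P).natDegree) h1
  simp only [map_pow, map_add, map_sub, map_mul, optionEquivLeft_X_some, optionEquivLeft_C,
    Polynomial.natDegree_pow] at h2
  rw [Polynomial.eq_C_of_natDegree_eq_zero hB] at h2
  simp only [← Polynomial.C_pow, ← Polynomial.C_mul, ← Polynomial.C_add, ← Polynomial.C_sub,
    Polynomial.natDegree_C] at h2
  rcases Nat.mul_eq_zero.1 h2 with h3 | h3
  · omega
  · exact h3

/-- Coprime powers `i, j ≥ 2`: the cuspidal curves `u ^ i - c v ^ j` carry no nonconstant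
one-parameter family of polynomial solutions. -/
theorem natDegree_eq_zero_of_cusp (p : ℕ) [Fact p.Prime] [CharP K p] {i j : ℕ} (hi : 2 ≤ i)
    (hj : 2 ≤ j) (hij : Nat.Coprime i j) {c : K} (hc : c ≠ 0)
    {A B : MvPolynomial (Option (Fin 2)) K}
    (h : A ^ i - C c * B ^ j = X (some 0) ^ i - C c * X (some 1) ^ j) :
    (optionEquivLeft K (Fin 2) A).natDegree = 0 ∧ (optionEquivLeft K (Fin 2) B).natDegree = 0 := by
  have hp := (Fact.out : p.Prime)
  by_cases hi0 : (i : K) = 0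
  · refine cusp_aux p hi hj hi0 ?_ hc h
    intro hj0
    rw [CharP.cast_eq_zero_iff K p] at hi0 hj0
    exact Nat.not_coprime_of_dvd_of_dvd hp.one_lt hi0 hj0 hij
  by_cases hj0 : (j : K) = 0
  · have hcc : (C c⁻¹ * C c : MvPolynomial (Option (Fin 2)) K) = 1 := by
      rw [← C_mul, inv_mul_cancel₀ hc, C_1]
    refine (cusp_aux p hj hi hj0 hi0 (inv_ne_zero hc) (u := 1) (v := 0) ?_).symm
    linear_combination (-C c⁻¹) * h - (B ^ j - X (some 1) ^ j) * hcc
  let L := FractionRing (MvPolynomial (Fin 2) K)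
  have inj : Function.Injective (algebraMap (MvPolynomial (Fin 2) K) L) :=
    IsFractionRing.injective _ _
  have injK : Function.Injective (algebraMap K L) := (algebraMap K L).injective
  have : CharP L p := charP_of_injective_algebraMap injK p
  let ψ : MvPolynomial (Option (Fin 2)) K →+* Polynomial L :=
    (Polynomial.mapRingHom (algebraMap (MvPolynomial (Fin 2) K) L)).comp
      (optionEquivLeft K (Fin 2)).toRingEquiv.toRingHom
  have hψ : ∀ P, (ψ P).natDegree = (optionEquivLeft K (Fin 2) P).natDegree := fun P =>
    Polynomial.natDegree_map_eq_of_injective inj _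
  have hψC : ψ (C c) = Polynomial.C (algebraMap (MvPolynomial (Fin 2) K) L (C c)) := by
    simp [ψ]
  have hψX : ∀ u : Fin 2, ψ (X (some u)) =
      Polynomial.C (algebraMap (MvPolynomial (Fin 2) K) L (X u)) := by
    intro u; simp [ψ]
  have h1 : ψ A ^ i - Polynomial.C (algebraMap (MvPolynomial (Fin 2) K) L (C c)) * ψ B ^ j =
      Polynomial.C (algebraMap (MvPolynomial (Fin 2) K) L (X 0 ^ i - C c * X 1 ^ j)) := by
    have h2 := congrArg ψ h
    simp only [map_sub, map_mul, map_pow, hψC, hψX] at h2 ⊢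
    exact h2
  have hcast : ∀ k : ℕ, (k : K) ≠ 0 → (k : L) ≠ 0 := fun k hk => by
    rwa [← map_natCast (algebraMap K L), map_ne_zero_iff _ injK]
  have := natDegree_eq_zero_of_pow_sub_pow_eq_C p hi hj (hcast i hi0) (hcast j hj0)
    ((map_ne_zero_iff _ inj).2 (by simpa using hc))
    ((map_ne_zero_iff _ inj).2 (X_pow_sub_C_mul_X_pow_ne_zero (by omega))) h1
  rwa [hψ, hψ] at this

end Cusp

section Proportional

universe u

variable {K : Type*} [Field K]

theorem weight_fin_two (w : Fin 2 → ℚ) (d : Fin 2 →₀ ℕ) :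
    Finsupp.weight w d = d 0 * w 0 + d 1 * w 1 := by
  rw [Finsupp.weight_apply, Finsupp.sum_fintype _ _ (by simp), Fin.sum_univ_two]
  simp

theorem totalDegree_pow_of_isDomain {σ : Type*} {P : MvPolynomial σ K} (hP : P ≠ 0) (k : ℕ) :
    (P ^ k).totalDegree = k * P.totalDegree := by
  induction k with
  | zero => simp
  | succ k ih =>
    rw [pow_succ, totalDegree_mul_of_isDomain (pow_ne_zero _ hP) hP, ih]; ring

theorem totalDegree_aeval_polynomial {σ : Type*} {P : MvPolynomial σ K}
    (hP : P.totalDegree ≠ 0) (h : Polynomial K) :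
    (Polynomial.aeval P h).totalDegree = h.natDegree * P.totalDegree := by
  have hP0 : P ≠ 0 := by rintro rfl; simp at hP
  induction hN : h.natDegree using Nat.strong_induction_on generalizing h with
  | _ N ih =>
  by_cases hN0 : N = 0
  · rw [Polynomial.eq_C_of_natDegree_eq_zero (hN.trans hN0), Polynomial.aeval_C, algebraMap_eq,
      totalDegree_C, hN0, zero_mul]
  have hlc : h.leadingCoeff ≠ 0 := by
    rw [Polynomial.leadingCoeff_ne_zero]; rintro rfl; simp at hN; omega
  have htop : (Polynomial.aeval P (Polynomial.C h.leadingCoeff * Polynomial.X ^ N)).totalDegree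
      = N * P.totalDegree := by
    rw [map_mul, map_pow, Polynomial.aeval_C, Polynomial.aeval_X, algebraMap_eq,
      totalDegree_mul_of_isDomain (by simpa using hlc) (pow_ne_zero _ hP0),
      totalDegree_pow_of_isDomain hP0, totalDegree_C, zero_add]
  have hlow : (Polynomial.aeval P h.eraseLead).totalDegree < N * P.totalDegree := by
    have h1 := Polynomial.eraseLead_natDegree_le h
    rw [ih _ (by omega) _ rfl]
    exact Nat.mul_lt_mul_of_pos_right (by omega) (Nat.pos_of_ne_zero hP)
  have e := h.eraseLead_add_C_mul_X_pow
  rw [hN] at e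
  conv_lhs => rw [← e]
  rw [map_add, totalDegree_add_eq_right_of_totalDegree_lt (by rw [htop]; exact hlow), htop]

theorem aeval_polynomial_eq_zero {σ : Type*} {P : MvPolynomial σ K} {h : Polynomial K}
    (h0 : h ≠ 0) (hP : Polynomial.aeval P h = 0) : ∃ c, P = C c ∧ h.eval c = 0 := by
  have h1 : P.totalDegree = 0 := by
    by_contra h1
    have h2 := totalDegree_aeval_polynomial h1 h
    rw [hP, totalDegree_zero] at h2
    rcases Nat.mul_eq_zero.1 h2.symm with h3 | h3
    · rw [Polynomial.eq_C_of_natDegree_eq_zero h3, Polynomial.aeval_C, algebraMap_eq,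
        C_eq_zero] at hP
      rw [Polynomial.eq_C_of_natDegree_eq_zero h3, hP, Polynomial.C_0] at h0
      exact h0 rfl
    · exact h1 h3
  obtain ⟨c, rfl⟩ : ∃ c, P = C c := ⟨_, totalDegree_eq_zero_iff_eq_C.1 h1⟩
  refine ⟨c, rfl, ?_⟩
  rw [← algebraMap_eq, Polynomial.aeval_algebraMap_apply, algebraMap_eq, C_eq_zero] at hP
  simpa using hP

/-- A weighted homogeneous polynomial in two variables is a monomial times a polynomial in the
ratio of two coprime powers of the variables. -/
theorem exists_dehomogenization {K : Type u} [Field K] {a b i j g : ℕ} (hi0 : 0 < i)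
    (hg : 0 < g) (ha : a = g * j) (hb : b = g * i) (hij : Nat.Coprime i j) {N : ℚ}
    {P : MvPolynomial (Fin 2) K} (hP0 : P ≠ 0)
    (hP : IsWeightedHomogeneous ![(a : ℚ), (b : ℚ)] P N) :
    ∃ (r s : ℕ) (h : Polynomial K), h ≠ 0 ∧ ∀ (S : Type u) [CommRing S] [Algebra K S] (α β z : S),
      α ^ i = z * β ^ j → aeval ![α, β] P = α ^ r * β ^ s * Polynomial.aeval z h := by
  obtain ⟨d₀, hd₀, hmin⟩ := P.support.exists_min_image (fun d => d 0)
    (Finset.nonempty_of_ne_empty (by simpa using hP0))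
  have hwt : ∀ d ∈ P.support, a * d 0 + b * d 1 = a * d₀ 0 + b * d₀ 1 := by
    intro d hd
    have h1 := hP (mem_support_iff.1 hd)
    have h2 := hP (mem_support_iff.1 hd₀)
    rw [← h2] at h1
    simp only [weight_fin_two, Matrix.cons_val_zero, Matrix.cons_val_one] at h1
    have h3 : ((a * d 0 + b * d 1 : ℕ) : ℚ) = ((a * d₀ 0 + b * d₀ 1 : ℕ) : ℚ) := by
      push_cast; linarith
    exact_mod_cast h3
  have hex : ∀ d ∈ P.support, ∃ k, d 0 = d₀ 0 + i * k ∧ d₀ 1 = d 1 + j * k := by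
    intro d hd
    obtain ⟨e, he⟩ := Nat.exists_eq_add_of_le (hmin d hd)
    have h1 := hwt d hd
    rw [ha, hb, he] at h1
    have h2 : j * e + i * d 1 = i * d₀ 1 := by
      apply Nat.eq_of_mul_eq_mul_left hg; linarith
    have h3 : i ∣ j * e := by
      rw [Nat.dvd_add_iff_left (Dvd.intro _ rfl : i ∣ i * d 1), h2]
      exact Dvd.intro _ rfl
    obtain ⟨k, rfl⟩ := hij.dvd_of_dvd_mul_left h3
    refine ⟨k, he, ?_⟩
    apply Nat.eq_of_mul_eq_mul_left hi0
    rw [← h2]; ring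
  choose! k hk using hex
  refine ⟨d₀ 0, d₀ 1, ∑ d ∈ P.support, Polynomial.C (coeff d P) * Polynomial.X ^ k d, ?_, ?_⟩
  · intro h0
    have h1 := congrArg (fun h => Polynomial.coeff h 0) h0
    simp only [Polynomial.finsetSum_coeff, Polynomial.coeff_C_mul, Polynomial.coeff_X_pow,
      Polynomial.coeff_zero] at h1
    rw [Finset.sum_eq_single d₀] at h1
    · have h2 := (hk d₀ hd₀).1
      have h3 : k d₀ = 0 := by
        rcases Nat.mul_eq_zero.1 (by omega : i * k d₀ = 0) with h | h
        · omega
        · exact h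
      rw [h3] at h1
      simp only [if_true, mul_one] at h1
      exact mem_support_iff.1 hd₀ h1
    · intro d hd hne
      rw [if_neg, mul_zero]
      intro h2
      apply hne
      have h3 := hk d hd
      rw [← h2] at h3
      ext x
      fin_cases x
      · simpa using h3.1
      · simpa using h3.2.symm
    · exact fun h => absurd hd₀ h
  · intro S _ _ α β z hz
    conv_lhs => rw [P.as_sum]
    rw [map_sum, map_sum, Finset.mul_sum]
    refine Finset.sum_congr rfl fun d hd => ?_
    obtain ⟨h1, h2⟩ := hk d hd
    rw [aeval_monomial, Finsupp.prod_fintype _ _ (fun _ => pow_zero _), Fin.prod_univ_two,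
      map_mul, map_pow, Polynomial.aeval_C, Polynomial.aeval_X]
    simp only [Matrix.cons_val_zero, Matrix.cons_val_one]
    rw [h1, h2, pow_add, pow_mul, hz, pow_add, mul_pow, ← pow_mul]
    ring

theorem exists_proportional_powers {a b i j g : ℕ} (hi0 : 0 < i)
    (hg : 0 < g) (ha : a = g * j) (hb : b = g * i) (hij : Nat.Coprime i j) {N : ℚ}
    {P : MvPolynomial (Fin 2) K} (hP0 : P ≠ 0)
    (hP : IsWeightedHomogeneous ![(a : ℚ), (b : ℚ)] P N) {α β : MvPolynomial (Fin 2) K}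
    (hα : α ≠ 0) (hβ : β ≠ 0) (h : aeval ![α, β] P = 0) :
    ∃ c : K, c ≠ 0 ∧ α ^ i = C c * β ^ j ∧ (X 0 ^ i - C c * X 1 ^ j) ∣ P := by
  obtain ⟨r, s, φ, hφ, hev⟩ := exists_dehomogenization hi0 hg ha hb hij hP0 hP
  let L := FractionRing (MvPolynomial (Fin 2) K)
  let ι : MvPolynomial (Fin 2) K →ₐ[K] L := Algebra.algHom K _ L
  have inj : Function.Injective ι := IsFractionRing.injective (MvPolynomial (Fin 2) K) L
  have hα' : ι α ≠ 0 := (map_ne_zero_iff _ inj).2 hα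
  have hβ' : ι β ≠ 0 := (map_ne_zero_iff _ inj).2 hβ
  have h1 := hev L (ι α) (ι β) (ι α ^ i / ι β ^ j)
    (div_mul_cancel₀ _ (pow_ne_zero _ hβ')).symm
  have h2 : aeval ![ι α, ι β] P = ι (aeval ![α, β] P) := by
    have h3 : (aeval ![ι α, ι β] : MvPolynomial (Fin 2) K →ₐ[K] L) = ι.comp (aeval ![α, β]) := by
      apply MvPolynomial.algHom_ext
      intro x; fin_cases x <;> simp
    rw [h3, AlgHom.comp_apply]
  rw [h2, h, map_zero] at h1
  have h3 : Polynomial.aeval (ι α ^ i / ι β ^ j) φ = 0 := by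
    rcases mul_eq_zero.1 h1.symm with h4 | h4
    · exact absurd h4 (mul_ne_zero (pow_ne_zero _ hα') (pow_ne_zero _ hβ'))
    · exact h4
  have hintegral : IsIntegral K (ι α ^ i / ι β ^ j) := IsAlgebraic.isIntegral ⟨φ, hφ, h3⟩
  obtain ⟨ρ, hρ⟩ := (IsIntegrallyClosed.isIntegral_iff (R := MvPolynomial (Fin 2) K)).1
    (hintegral.tower_top (A := MvPolynomial (Fin 2) K))
  have hρ' : ι ρ = ι α ^ i / ι β ^ j := hρ
  rw [← hρ', Polynomial.aeval_algHom_apply] at h3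
  obtain ⟨c, rfl, hc⟩ := aeval_polynomial_eq_zero hφ ((map_eq_zero_iff _ inj).1 h3)
  refine ⟨c, ?_, ?_, ?_⟩
  · rintro rfl
    rw [C_0, map_zero] at hρ'
    exact div_ne_zero (pow_ne_zero _ hα') (pow_ne_zero _ hβ') hρ'.symm
  · apply inj
    rw [map_pow, map_mul, map_pow, hρ', div_mul_cancel₀ _ (pow_ne_zero _ hβ')]
  · rw [← Ideal.mem_span_singleton, ← Ideal.Quotient.eq_zero_iff_mem]
    let I := Ideal.span {(X 0 ^ i - C c * X 1 ^ j : MvPolynomial (Fin 2) K)}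
    let π : MvPolynomial (Fin 2) K →ₐ[K] MvPolynomial (Fin 2) K ⧸ I := Ideal.Quotient.mkₐ K I
    have h5 := hev _ (π (X 0)) (π (X 1)) (algebraMap K _ c) (by
      have : π (X 0 ^ i - C c * X 1 ^ j) = 0 :=
        Ideal.Quotient.eq_zero_iff_mem.2 (Ideal.mem_span_singleton_self _)
      rw [map_sub, sub_eq_zero, map_mul, map_pow, map_pow, ← algebraMap_eq, AlgHom.commutes] at this
      exact this)
    rw [Polynomial.aeval_algebraMap_apply, Polynomial.aeval_def, Polynomial.eval₂_eq_eval_map] at h5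
    have h6 : aeval ![π (X 0), π (X 1)] P = π P := by
      have : (aeval ![π (X 0), π (X 1)] : MvPolynomial (Fin 2) K →ₐ[K] _) = π := by
        apply MvPolynomial.algHom_ext
        intro x; fin_cases x <;> simp
      rw [this]
    rw [h6] at h5
    change π P = 0
    rw [h5]
    simp [hc]

end Proportional

section Degeneration

variable {K : Type*} [Field K]

theorem optionEquivLeft_coeff_zero (P : MvPolynomial (Option (Fin 2)) K) :
    (optionEquivLeft K (Fin 2) P).coeff 0 = aeval (fun o : Option (Fin 2) => o.elim 0 X) P := by
  induction P using MvPolynomial.induction_on with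
  | C a => simp
  | add p q hp hq => simp [hp, hq]
  | mul_X p o hp =>
    rw [map_mul, Polynomial.mul_coeff_zero, hp, map_mul, aeval_X]
    cases o <;> simp

theorem optionEquivLeft_natDegree_eq_zero_iff {P : MvPolynomial (Option (Fin 2)) K} :
    (optionEquivLeft K (Fin 2) P).natDegree = 0 ↔ ∀ d ∈ P.support, d none = 0 := by
  rw [natDegree_optionEquivLeft, degreeOf_eq_sup, ← Nat.le_zero, Finset.sup_le_iff]
  simp

theorem optionEquivLeft_rename_some (P : MvPolynomial (Fin 2) K) :
    optionEquivLeft K (Fin 2) (rename some P) = Polynomial.C P := by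
  induction P using MvPolynomial.induction_on with
  | C a => simp
  | add p q hp hq => simp [hp, hq]
  | mul_X p o hp => simp [hp]

theorem optionEquivLeft_aeval_natDegree {A : Fin 2 → MvPolynomial (Option (Fin 2)) K}
    (hA : ∀ i, (optionEquivLeft K (Fin 2) (A i)).natDegree = 0) (P : MvPolynomial (Fin 2) K) :
    (optionEquivLeft K (Fin 2) (aeval A P)).natDegree = 0 := by
  have h : ∀ i, A i = rename some ((optionEquivLeft K (Fin 2) (A i)).coeff 0) := fun i => by
    apply (optionEquivLeft K (Fin 2)).injective
    rw [optionEquivLeft_rename_some, ← Polynomial.eq_C_of_natDegree_eq_zero (hA i)]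
  rw [show A = fun i => rename some ((optionEquivLeft K (Fin 2) (A i)).coeff 0) from funext h]
  have e := MvPolynomial.comp_aeval_apply
    (f := fun i => (optionEquivLeft K (Fin 2) (A i)).coeff 0)
    (rename some : MvPolynomial (Fin 2) K →ₐ[K] MvPolynomial (Option (Fin 2)) K) P
  rw [← e, optionEquivLeft_rename_some, Polynomial.natDegree_C]

theorem weight_option (t : ℚ) (w : Fin 2 → ℚ) (d : Option (Fin 2) →₀ ℕ) :
    Finsupp.weight (fun o : Option (Fin 2) => o.elim t w) d
      = d none * t + (d (some 0) * w 0 + d (some 1) * w 1) := by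
  rw [Finsupp.weight_apply, Finsupp.sum_fintype _ _ (by simp), Fintype.sum_option,
    Fin.sum_univ_two]
  simp

/-- Adding a parameter to one coordinate of the inverse of an automorphism and passing to leading
forms deforms the identity while preserving the leading form of the other coordinate. -/
theorem exists_degeneration (φ : MvPolynomial (Fin 2) K ≃ₐ[K] MvPolynomial (Fin 2) K) (k : Fin 2)
    {w : Fin 2 → ℚ} {N : ℚ} {G : MvPolynomial (Fin 2) K} (hG : IsTopForm w N (φ.symm (X k)) G) :
    ∃ A : Fin 2 → MvPolynomial (Option (Fin 2)) K, aeval A G = rename some G ∧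
      (∃ i, (optionEquivLeft K (Fin 2) (A i)).natDegree ≠ 0) ∧
      ∀ i, (optionEquivLeft K (Fin 2) (A i)).coeff 0 = X i := by
  classical
  let Z : Fin 2 → MvPolynomial (Option (Fin 2)) K := fun l =>
    rename some (φ.symm (X l)) + if l = k then 0 else X none
  let B : Fin 2 → MvPolynomial (Option (Fin 2)) K := fun i => aeval Z (φ (X i))
  have hB : ∀ P, aeval B P = aeval Z (φ P) := fun P => by
    have : (aeval B : MvPolynomial (Fin 2) K →ₐ[K] _) = (aeval Z).comp φ.toAlgHom := by
      apply MvPolynomial.algHom_ext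
      intro i; simp [B]
    rw [this]; rfl
  have hBZ : ∀ l, aeval B (φ.symm (X l)) = Z l := fun l => by
    rw [hB, AlgEquiv.apply_symm_apply, aeval_X]
  have hB0 : ∀ i, (optionEquivLeft K (Fin 2) (B i)).coeff 0 = X i := fun i => by
    rw [optionEquivLeft_coeff_zero]
    have : (aeval (fun o : Option (Fin 2) => o.elim (0 : MvPolynomial (Fin 2) K) X)).comp
        (aeval Z : MvPolynomial (Fin 2) K →ₐ[K] _) = φ.symm.toAlgHom := by
      apply MvPolynomial.algHom_ext
      intro l
      rw [AlgHom.comp_apply, aeval_X, ← optionEquivLeft_coeff_zero, map_add,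
        optionEquivLeft_rename_some]
      split_ifs <;> simp
    have := DFunLike.congr_fun this (φ (X i))
    simpa [B] using this
  have hex : ∃ i, ∃ d ∈ (B i).support, d none ≠ 0 := by
    by_contra! h
    obtain ⟨l, hl⟩ := exists_ne k
    have h1 := optionEquivLeft_aeval_natDegree
      (fun i => optionEquivLeft_natDegree_eq_zero_iff.2 (h i)) (φ.symm (X l))
    rw [hBZ] at h1
    simp only [Z, if_neg hl, map_add, optionEquivLeft_rename_some, optionEquivLeft_X_none] at h1
    rw [Polynomial.natDegree_add_eq_right_of_natDegree_lt (by simp)] at h1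
    simp at h1
  let T : Finset ((_ : Fin 2) × (Option (Fin 2) →₀ ℕ)) :=
    Finset.univ.sigma fun i => (B i).support.filter fun d => d none ≠ 0
  let slope : ((_ : Fin 2) × (Option (Fin 2) →₀ ℕ)) → ℚ := fun x =>
    (x.2 (some 0) * w 0 + x.2 (some 1) * w 1 - w x.1) / x.2 none
  obtain ⟨i₀, d₀, hd₀, hd₀'⟩ := hex
  obtain ⟨x, hxT, hx⟩ := T.exists_max_image slope ⟨⟨i₀, d₀⟩, by simpa [T] using ⟨mem_support_iff.1 hd₀, hd₀'⟩⟩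
  let W : Option (Fin 2) → ℚ := fun o => o.elim (- slope x) w
  have hW : ∀ i, ∀ d, coeff d (B i) ≠ 0 → Finsupp.weight W d ≤ w i := by
    intro i d hd
    rw [weight_option]
    by_cases h0 : d none = 0
    · have h1 : coeff d.some (X i : MvPolynomial (Fin 2) K) ≠ 0 := by
        rw [← hB0, optionEquivLeft_coeff_coeff, ← h0, Finsupp.optionElim_some]
        exact hd
      rw [coeff_X] at h1
      have h2 : Finsupp.single i 1 = d.some := by by_contra h; simp [h] at h1
      have h3 : d (some 0) = Finsupp.single i 1 (0 : Fin 2) := by rw [h2]; rfl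
      have h4 : d (some 1) = Finsupp.single i 1 (1 : Fin 2) := by rw [h2]; rfl
      rw [h0, h3, h4]
      fin_cases i <;> simp
    · have h1 := hx ⟨i, d⟩ (by simpa [T] using ⟨hd, h0⟩)
      have h2 : (0 : ℚ) < d none := by positivity
      have h3 : (d (some 0) * w 0 + d (some 1) * w 1 - w i) / d none ≤ slope x := h1
      rw [div_le_iff₀ h2] at h3
      linarith
  let A : Fin 2 → MvPolynomial (Option (Fin 2)) K := fun i =>
    weightedHomogeneousComponent W (w i) (B i)
  have hA : ∀ i, IsTopForm W (w i) (B i) (A i) := fun i => IsTopForm.of_le (hW i)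
  refine ⟨A, ?_, ?_, ?_⟩
  · have h1 := IsTopForm.aeval hA hG
    rw [hBZ] at h1
    have h2 : IsTopForm W N (rename some (φ.symm (X k))) (rename some G) := by
      have e : (rename some : MvPolynomial (Fin 2) K →ₐ[K] MvPolynomial (Option (Fin 2)) K)
          = aeval (X ∘ some) := MvPolynomial.algHom_ext (by simp)
      rw [e]
      exact IsTopForm.aeval (A := X ∘ some) (A' := X ∘ some) (fun i =>
        IsTopForm.of_homogeneous (isWeightedHomogeneous_X K W (some i))) hG
    have h3 : Z k = rename some (φ.symm (X k)) := by simp [Z]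
    rw [h3] at h1
    exact h1.unique h2
  · refine ⟨x.1, fun h => ?_⟩
    simp only [T, Finset.mem_sigma, Finset.mem_filter, Finset.mem_univ, true_and] at hxT
    refine hxT.2 (optionEquivLeft_natDegree_eq_zero_iff.1 h x.2 ?_)
    rw [mem_support_iff, coeff_weightedHomogeneousComponent, if_pos]
    · exact mem_support_iff.1 hxT.1
    · rw [weight_option]
      have h2 : (x.2 none : ℚ) ≠ 0 := by exact_mod_cast hxT.2
      simp only [slope]
      field_simp
      ring
  · intro i
    ext m
    rw [optionEquivLeft_coeff_coeff, coeff_weightedHomogeneousComponent,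
      ← optionEquivLeft_coeff_coeff, hB0]
    split_ifs with h
    · rfl
    · rw [coeff_X, if_neg]
      rintro rfl
      apply h
      rw [weight_option]
      simp only [Finsupp.optionElim_apply_none, Finsupp.optionElim_apply_some]
      fin_cases i <;> simp

end Degeneration

section JungVanDerKulk

variable {K : Type*} [Field K]

theorem totalDegree_automorphism_X_ne_zero
    (φ : MvPolynomial (Fin 2) K ≃ₐ[K] MvPolynomial (Fin 2) K) (k : Fin 2) :
    (φ (X k)).totalDegree ≠ 0 := by
  intro h
  rw [totalDegree_eq_zero_iff_eq_C] at h
  have h1 : φ (X k) = φ (C (coeff 0 (φ (X k)))) := by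
    rw [← algebraMap_eq, AlgEquiv.commutes, algebraMap_eq]; exact h
  have h2 := congrArg totalDegree (φ.injective h1)
  rw [totalDegree_X, totalDegree_C] at h2
  omega

theorem exists_mem_support_symm_X (φ : MvPolynomial (Fin 2) K ≃ₐ[K] MvPolynomial (Fin 2) K)
    (u : Fin 2) : ∃ k, ∃ d, coeff d (φ.symm (X k)) ≠ 0 ∧ d u ≠ 0 := by
  by_contra! h
  let ε : MvPolynomial (Fin 2) K →ₐ[K] MvPolynomial (Fin 2) K :=
    aeval fun i => if i = u then 0 else X i
  have h1 : ε.comp φ.symm.toAlgHom = φ.symm.toAlgHom := by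
    apply MvPolynomial.algHom_ext
    intro k
    refine hom_congr_vars (f₁ := (ε : MvPolynomial (Fin 2) K →+* MvPolynomial (Fin 2) K)) (f₂ := RingHom.id _) ?_ ?_ rfl
    · ext; simp
    · intro i hi _
      have : i ≠ u := by
        rintro rfl
        obtain ⟨d, hd, hd'⟩ := (mem_vars_iff_mem_support (i := i)).1 hi
        exact (Finsupp.mem_support_iff.1 hd') (h k d (mem_support_iff.1 hd))
      simp [ε, this]
  have h2 := DFunLike.congr_fun h1 (φ (X u))
  simp [ε] at h2
  exact X_ne_zero u h2.symm

theorem IsTopForm.sub_C_mul_pow {P Q P' Q' : MvPolynomial (Fin 2) K} {a b j : ℕ}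
    (hP : IsTopForm (fun _ => 1) (a : ℚ) P P') (hQ : IsTopForm (fun _ => 1) (b : ℚ) Q Q')
    (hab : a = j * b) {c : K} (h : P' = C c * Q' ^ j) (ha : a ≠ 0) :
    (P - C c * Q ^ j).totalDegree < a := by
  have h1 := (hQ.pow j).C_mul (-c)
  have e : (j : ℚ) * b = a := by rw [hab]; push_cast; ring
  rw [e] at h1
  have h2 := hP.add h1
  have e1 : P + C (-c) * Q ^ j = P - C c * Q ^ j := by rw [C_neg]; ring
  have e2 : P' + C (-c) * Q' ^ j = 0 := by rw [C_neg, h]; ring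
  rw [e1, e2] at h2
  exact_mod_cast h2.totalDegree_lt (by positivity)

/-- The degree reduction step of the Jung–van der Kulk theorem: for an automorphism of the plane
of degree at least two, the leading form of one coordinate is a scalar times a power of the leading
form of the other. -/
theorem exists_degree_reduction (p : ℕ) [Fact p.Prime] [CharP K p]
    (φ : MvPolynomial (Fin 2) K ≃ₐ[K] MvPolynomial (Fin 2) K) (hφ : 2 ≤ autDeg φ) :
    (∃ (c : K) (j : ℕ), (φ (X 0)).totalDegree = j * (φ (X 1)).totalDegree ∧
      (φ (X 0) - C c * φ (X 1) ^ j).totalDegree < (φ (X 0)).totalDegree) ∨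
    (∃ (c : K) (j : ℕ), (φ (X 1)).totalDegree = j * (φ (X 0)).totalDegree ∧
      (φ (X 1) - C c * φ (X 0) ^ j).totalDegree < (φ (X 1)).totalDegree) := by
  set f := φ (X 0) with hf
  set g := φ (X 1) with hg
  have ha : f.totalDegree ≠ 0 := totalDegree_automorphism_X_ne_zero φ 0
  have hb : g.totalDegree ≠ 0 := totalDegree_automorphism_X_ne_zero φ 1
  have hf0 : f ≠ 0 := by rintro h; simp [h] at ha
  have hg0 : g ≠ 0 := by rintro h; simp [h] at hb
  let w : Fin 2 → ℚ := ![(f.totalDegree : ℚ), (g.totalDegree : ℚ)]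
  have hw : ∃ u, 1 < w u := by
    rcases le_max_iff.1 hφ with h | h
    · exact ⟨0, show (1 : ℚ) < f.totalDegree by exact_mod_cast h⟩
    · exact ⟨1, show (1 : ℚ) < g.totalDegree by exact_mod_cast h⟩
  obtain ⟨u, hu⟩ := hw
  obtain ⟨k, d, hd, hdu⟩ := exists_mem_support_symm_X φ u
  have hdw : 1 < Finsupp.weight w d := by
    refine hu.trans_le (Finsupp.le_weight_of_ne_zero (w := w) (fun s => ?_) hdu)
    fin_cases s <;> simp [w]
  have hk0 : φ.symm (X k) ≠ 0 := (map_ne_zero_iff _ φ.symm.injective).2 (X_ne_zero k)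
  obtain ⟨e, G, -, hG0, hG⟩ := exists_isTopForm w hk0
  have hN : 1 < Finsupp.weight w e := hdw.trans_le (hG.weight_le hd)
  obtain ⟨f', hf'0, hf'⟩ := exists_isTopForm_totalDegree hf0
  obtain ⟨g', hg'0, hg'⟩ := exists_isTopForm_totalDegree hg0
  have hzero : aeval ![f', g'] G = 0 := by
    have h1 := IsTopForm.aeval (w := fun _ : Fin 2 => (1 : ℚ)) (v := w) (A := ![f, g])
      (A' := ![f', g']) (fun t => by fin_cases t; exacts [hf', hg']) hG
    have h2 : (aeval ![f, g] : MvPolynomial (Fin 2) K →ₐ[K] _) = φ.toAlgHom := by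
      apply MvPolynomial.algHom_ext
      intro i; fin_cases i <;> simp [f, g]
    rw [h2] at h1
    have h3 : φ.toAlgHom (φ.symm (X k)) = X k := φ.apply_symm_apply _
    rw [h3] at h1
    refine h1.unique (IsTopForm.of_lt fun d hd => ?_)
    rw [coeff_X] at hd
    have hd' : Finsupp.single k 1 = d := by by_contra h; simp [h] at hd
    rw [← hd', weight_one_eq]
    simpa using hN
  obtain ⟨j, i, hcop, hj, hi⟩ := Nat.exists_coprime f.totalDegree g.totalDegree
  set m := Nat.gcd f.totalDegree g.totalDegree
  have hm : 0 < m := Nat.gcd_pos_of_pos_left _ (Nat.pos_of_ne_zero ha)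
  have hi0 : 0 < i := Nat.pos_of_ne_zero fun h => hb (by rw [hi, h, zero_mul])
  have hj0 : 0 < j := Nat.pos_of_ne_zero fun h => ha (by rw [hj, h, zero_mul])
  obtain ⟨c, hc, hpow, hdvd⟩ := exists_proportional_powers hi0 hm (hj.trans (mul_comm _ _))
    (hi.trans (mul_comm _ _)) hcop.symm hG0 hG.1 hf'0 hg'0 hzero
  obtain ⟨A, hAG, ⟨l, hl⟩, hA0⟩ := exists_degeneration φ k hG
  have hcusp : A 0 ^ i - C c * A 1 ^ j = X (some 0) ^ i - C c * X (some 1) ^ j := by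
    have h1 : A 0 ^ i - C c * A 1 ^ j ∣ rename some G := by
      rw [← hAG]
      simpa using map_dvd (aeval A) hdvd
    have h2 := optionEquivLeft_natDegree_eq_zero_of_dvd h1
      ((map_ne_zero_iff _ (rename_injective _ (Option.some_injective _))).2 hG0)
      (by rw [optionEquivLeft_rename_some, Polynomial.natDegree_C])
    apply (optionEquivLeft K (Fin 2)).injective
    rw [Polynomial.eq_C_of_natDegree_eq_zero h2]
    simp [Polynomial.coeff_zero_eq_eval_zero] at hA0 ⊢
    simp [hA0]
  by_cases hi1 : i = 1
  · left
    subst hi1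
    rw [one_mul] at hi
    refine ⟨c, j, by rw [hi]; exact hj, ?_⟩
    exact hf'.sub_C_mul_pow hg' (by rw [hi]; exact hj) (by simpa using hpow) ha
  by_cases hj1 : j = 1
  · right
    subst hj1
    rw [one_mul] at hj
    refine ⟨c⁻¹, i, by rw [hj]; exact hi, ?_⟩
    refine hg'.sub_C_mul_pow hf' (by rw [hj]; exact hi) ?_ hb
    rw [hpow, pow_one, ← mul_assoc, ← C_mul, inv_mul_cancel₀ hc, C_1, one_mul]
  exfalso
  obtain ⟨h0, h1⟩ := natDegree_eq_zero_of_cusp p (by omega) (by omega) hcop.symm hc hcusp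
  apply hl
  fin_cases l
  · exact h0
  · exact h1

end JungVanDerKulk

section Elementary

variable {K : Type*} [Field K]

/-- The group of automorphisms of the affine plane. -/
abbrev PlaneAut (K : Type*) [Field K] := MvPolynomial (Fin 2) K ≃ₐ[K] MvPolynomial (Fin 2) K

theorem PlaneAut.ext {φ ψ : PlaneAut K} (h0 : φ (X 0) = ψ (X 0)) (h1 : φ (X 1) = ψ (X 1)) :
    φ = ψ := by
  have : φ.toAlgHom = ψ.toAlgHom := by
    apply MvPolynomial.algHom_ext
    intro i; fin_cases i
    · exact h0
    · exact h1
  exact AlgEquiv.ext fun x => DFunLike.congr_fun this x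

theorem PlaneAut.apply_aeval_X_one (φ : PlaneAut K) (h : Polynomial K) :
    φ (Polynomial.aeval (X 1) h) = Polynomial.aeval (φ (X 1)) h :=
  (Polynomial.aeval_algHom_apply φ.toAlgHom (X 1) h).symm

/-- The automorphism `(x + h(y), y)`. -/
noncomputable def elementaryAut (h : Polynomial K) : PlaneAut K :=
  AlgEquiv.ofAlgHom (aeval ![X 0 + Polynomial.aeval (X 1) h, X 1])
    (aeval ![X 0 - Polynomial.aeval (X 1) h, X 1])
    (by
      apply MvPolynomial.algHom_ext
      intro i; fin_cases i
      · simp [← Polynomial.aeval_algHom_apply]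
      · simp)
    (by
      apply MvPolynomial.algHom_ext
      intro i; fin_cases i
      · simp [← Polynomial.aeval_algHom_apply]
      · simp)

theorem mul_elementaryAut_X_zero (φ : PlaneAut K) (h : Polynomial K) :
    (φ * elementaryAut h) (X 0) = φ (X 0) + Polynomial.aeval (φ (X 1)) h := by
  simp [elementaryAut, AlgEquiv.mul_apply, PlaneAut.apply_aeval_X_one]

theorem mul_elementaryAut_X_one (φ : PlaneAut K) (h : Polynomial K) :
    (φ * elementaryAut h) (X 1) = φ (X 1) := by
  simp [elementaryAut, AlgEquiv.mul_apply]

/-- Representatives of the lines through the origin, as linear automorphisms: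
the swap `(y, x)` and the shears `(x, y + c x)`. -/
noncomputable def lineAut : Option K → PlaneAut K
  | none => renameEquiv K (Equiv.swap 0 1)
  | some c => renameEquiv K (Equiv.swap 0 1) * elementaryAut (Polynomial.C c * Polynomial.X) *
      renameEquiv K (Equiv.swap 0 1)

theorem mul_swap_X_zero (φ : PlaneAut K) : (φ * lineAut (none : Option K)) (X 0) = φ (X 1) := by
  simp [lineAut, AlgEquiv.mul_apply]

theorem mul_swap_X_one (φ : PlaneAut K) : (φ * lineAut (none : Option K)) (X 1) = φ (X 0) := by
  simp [lineAut, AlgEquiv.mul_apply]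

theorem mul_shear_X_zero (φ : PlaneAut K) (c : K) : (φ * lineAut (some c)) (X 0) = φ (X 0) := by
  simp [lineAut, AlgEquiv.mul_apply, elementaryAut]

theorem mul_shear_X_one (φ : PlaneAut K) (c : K) :
    (φ * lineAut (some c)) (X 1) = φ (X 1) + C c * φ (X 0) := by
  have h : φ (C c) = C c := by rw [← algebraMap_eq]; exact φ.commutes c
  simp [lineAut, AlgEquiv.mul_apply, elementaryAut, algebraMap_eq, h]

theorem autDeg_pos (φ : PlaneAut K) : 0 < autDeg φ :=
  lt_max_of_lt_left (Nat.pos_of_ne_zero (totalDegree_automorphism_X_ne_zero φ 0))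

theorem exists_lineAut_normalization (p : ℕ) [Fact p.Prime] [CharP K p] (φ : PlaneAut K)
    (hφ : 2 ≤ autDeg φ) : ∃ (M : Option K) (ψ : PlaneAut K), φ = ψ * lineAut M ∧
      (ψ (X 0)).totalDegree = autDeg φ ∧ (ψ (X 1)).totalDegree < autDeg φ := by
  have ha := totalDegree_automorphism_X_ne_zero φ 0
  have hb := totalDegree_automorphism_X_ne_zero φ 1
  have key : ∀ c : K, (φ (X 0)).totalDegree = autDeg φ →
      (φ (X 1) - C c * φ (X 0)).totalDegree < autDeg φ →
      ∃ (M : Option K) (ψ : PlaneAut K), φ = ψ * lineAut M ∧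
      (ψ (X 0)).totalDegree = autDeg φ ∧ (ψ (X 1)).totalDegree < autDeg φ := by
    intro c h0 h1
    refine ⟨some c, φ * lineAut (some (-c)), ?_, ?_, ?_⟩
    · apply PlaneAut.ext
      · rw [mul_shear_X_zero, mul_shear_X_zero]
      · rw [mul_shear_X_one, mul_shear_X_one, mul_shear_X_zero, C_neg]; ring
    · rw [mul_shear_X_zero, h0]
    · rw [mul_shear_X_one, C_neg, neg_mul, ← sub_eq_add_neg]; exact h1
  have hdeg : autDeg φ = max (φ (X 0)).totalDegree (φ (X 1)).totalDegree := rfl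
  rcases exists_degree_reduction p φ hφ with ⟨c, j, hj, hlt⟩ | ⟨c, i, hi, hlt⟩
  · by_cases hj1 : j = 1
    · subst hj1
      rw [one_mul] at hj
      rw [pow_one] at hlt
      have hn : autDeg φ = (φ (X 0)).totalDegree := by rw [hdeg, ← hj, max_self]
      have hc : c ≠ 0 := by rintro rfl; simp at hlt
      refine key c⁻¹ hn.symm ?_
      have e : φ (X 1) - C c⁻¹ * φ (X 0) = C (-c⁻¹) * (φ (X 0) - C c * φ (X 1)) := by
        have : (C c⁻¹ * C c : MvPolynomial (Fin 2) K) = 1 := by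
          rw [← C_mul, inv_mul_cancel₀ hc, C_1]
        rw [C_neg]
        linear_combination - φ (X 1) * this
      rw [e, hn]
      refine lt_of_le_of_lt (totalDegree_mul _ _) ?_
      rw [totalDegree_C, zero_add]
      exact hlt
    · have hj2 : 2 ≤ j := by
        have : j ≠ 0 := by rintro rfl; omega
        omega
      have h1 : 2 * (φ (X 1)).totalDegree ≤ (φ (X 0)).totalDegree := by
        rw [hj]; exact Nat.mul_le_mul_right _ hj2
      refine key 0 (by omega) ?_
      simp only [C_0, zero_mul, sub_zero]
      omega
  · by_cases hi1 : i = 1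
    · subst hi1
      rw [one_mul] at hi
      rw [pow_one] at hlt
      exact key c (by omega) (by omega)
    · have hi2 : 2 ≤ i := by
        have : i ≠ 0 := by rintro rfl; omega
        omega
      have h1 : 2 * (φ (X 0)).totalDegree ≤ (φ (X 1)).totalDegree := by
        rw [hi]; exact Nat.mul_le_mul_right _ hi2
      refine ⟨none, φ * lineAut none, ?_, ?_, ?_⟩
      · apply PlaneAut.ext
        · rw [mul_swap_X_zero, mul_swap_X_one]
        · rw [mul_swap_X_one, mul_swap_X_zero]
      · rw [mul_swap_X_zero]; omega
      · rw [mul_swap_X_one]; omega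

theorem exists_elementary_reduction (p : ℕ) [Fact p.Prime] [CharP K p] (φ : PlaneAut K) :
    ∃ h : Polynomial K, Polynomial.X ^ 2 ∣ h ∧
      (φ (X 0) - Polynomial.aeval (φ (X 1)) h).totalDegree ≤ (φ (X 1)).totalDegree := by
  induction hN : (φ (X 0)).totalDegree using Nat.strong_induction_on generalizing φ with
  | _ N ih =>
  by_cases hle : N ≤ (φ (X 1)).totalDegree
  · exact ⟨0, dvd_zero _, by simpa [hN] using hle⟩
  have hb := totalDegree_automorphism_X_ne_zero φ 1
  have hdeg : autDeg φ = max (φ (X 0)).totalDegree (φ (X 1)).totalDegree := rfl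
  rcases exists_degree_reduction p φ (by omega) with ⟨c, j, hj, hlt⟩ | ⟨c, i, hi, hlt⟩
  · have hj2 : 2 ≤ j := by
      by_contra h
      have : j * (φ (X 1)).totalDegree ≤ 1 * (φ (X 1)).totalDegree :=
        Nat.mul_le_mul_right _ (by omega)
      omega
    have e0 := mul_elementaryAut_X_zero φ (-(Polynomial.C c * Polynomial.X ^ j))
    have e1 := mul_elementaryAut_X_one φ (-(Polynomial.C c * Polynomial.X ^ j))
    simp only [map_neg, map_mul, map_pow, Polynomial.aeval_C, Polynomial.aeval_X, algebraMap_eq,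
      ← sub_eq_add_neg] at e0
    obtain ⟨h, hh, hd⟩ := ih _ (by rw [← hN]; exact hlt)
      (φ * elementaryAut (-(Polynomial.C c * Polynomial.X ^ j))) (by rw [e0])
    rw [e0, e1] at hd
    refine ⟨h + Polynomial.C c * Polynomial.X ^ j,
      dvd_add hh (Dvd.dvd.mul_left (pow_dvd_pow _ hj2) _), ?_⟩
    have e2 : φ (X 0) - Polynomial.aeval (φ (X 1)) (h + Polynomial.C c * Polynomial.X ^ j)
        = φ (X 0) - C c * φ (X 1) ^ j - Polynomial.aeval (φ (X 1)) h := by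
      simp only [map_add, map_mul, map_pow, Polynomial.aeval_C, Polynomial.aeval_X, algebraMap_eq]
      ring
    rw [e2]
    exact hd
  · exfalso
    rcases Nat.eq_zero_or_pos i with rfl | h
    · omega
    · have := Nat.le_mul_of_pos_left (φ (X 0)).totalDegree h
      omega

theorem exists_decomposition (p : ℕ) [Fact p.Prime] [CharP K p] (φ : PlaneAut K)
    (hφ : 2 ≤ autDeg φ) : ∃ (M : Option K) (h : Polynomial K) (ψ : PlaneAut K),
      φ = ψ * elementaryAut h * lineAut M ∧ Polynomial.X ^ 2 ∣ h ∧
      autDeg φ = h.natDegree * autDeg ψ ∧ autDeg ψ < autDeg φ := by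
  obtain ⟨M, φ', hM, h0, h1⟩ := exists_lineAut_normalization p φ hφ
  obtain ⟨h, hh, hd⟩ := exists_elementary_reduction p φ'
  have e0 := mul_elementaryAut_X_zero φ' (-h)
  have e1 := mul_elementaryAut_X_one φ' (-h)
  rw [map_neg, ← sub_eq_add_neg] at e0
  have hdeg : autDeg (φ' * elementaryAut (-h)) = (φ' (X 1)).totalDegree := by
    rw [autDeg, e0, e1, max_eq_right hd]
  refine ⟨M, h, φ' * elementaryAut (-h), ?_, hh, ?_, ?_⟩
  · rw [hM]
    congr 1
    apply PlaneAut.ext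
    · rw [mul_elementaryAut_X_zero, e0, e1]; ring
    · rw [mul_elementaryAut_X_one, e1]
  · rw [hdeg, ← totalDegree_aeval_polynomial (totalDegree_automorphism_X_ne_zero φ' 1), ← h0]
    have e2 : Polynomial.aeval (φ' (X 1)) h
        = φ' (X 0) + -(φ' (X 0) - Polynomial.aeval (φ' (X 1)) h) := by ring
    rw [e2, totalDegree_add_eq_left_of_totalDegree_lt]
    rw [totalDegree_neg]
    omega
  · rw [hdeg]; exact h1

end Elementary

section Parameters

variable {K : Type*} [Field K]

/-- The polynomial `c t ^ d + ∑ v_k t ^ (k + 2)`. -/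
noncomputable def elementaryPoly (d : ℕ) (x : Kˣ × (Fin (d - 2) → K)) : Polynomial K :=
  Polynomial.C (x.1 : K) * Polynomial.X ^ d +
    Polynomial.X ^ 2 * ((Polynomial.degreeLTEquiv K (d - 2)).symm x.2 : Polynomial K)

theorem X_pow_two_dvd_elementaryPoly {d : ℕ} (hd : 2 ≤ d) (x : Kˣ × (Fin (d - 2) → K)) :
    Polynomial.X ^ 2 ∣ elementaryPoly d x :=
  dvd_add (Dvd.dvd.mul_left (pow_dvd_pow _ hd) _) (Dvd.intro _ rfl)

theorem degree_X_pow_two_mul_lt {d : ℕ} (hd : 2 ≤ d) (v : Fin (d - 2) → K) :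
    (Polynomial.X ^ 2 * ((Polynomial.degreeLTEquiv K (d - 2)).symm v : Polynomial K)).degree
      < (d : WithBot ℕ) := by
  have h := Polynomial.mem_degreeLT.1 ((Polynomial.degreeLTEquiv K (d - 2)).symm v).2
  rw [mul_comm, Polynomial.degree_mul, Polynomial.degree_X_pow]
  have e : ((d : ℕ) : WithBot ℕ) = ((d - 2 : ℕ) : WithBot ℕ) + 2 := by
    have : d = (d - 2) + 2 := by omega
    conv_lhs => rw [this]
    push_cast; rfl
  rw [e]
  exact WithBot.add_lt_add_right (by decide) h

theorem natDegree_elementaryPoly {d : ℕ} (hd : 2 ≤ d) (x : Kˣ × (Fin (d - 2) → K)) :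
    (elementaryPoly d x).natDegree = d := by
  apply Polynomial.natDegree_eq_of_degree_eq_some
  have h1 : (Polynomial.C (x.1 : K) * Polynomial.X ^ d).degree = (d : WithBot ℕ) :=
    Polynomial.degree_C_mul_X_pow d x.1.ne_zero
  rw [elementaryPoly, Polynomial.degree_add_eq_left_of_degree_lt, h1]
  rw [h1]
  exact degree_X_pow_two_mul_lt hd x.2

theorem coeff_elementaryPoly {d : ℕ} (hd : 2 ≤ d) (x : Kˣ × (Fin (d - 2) → K)) :
    (elementaryPoly d x).coeff d = x.1 := by
  rw [elementaryPoly, Polynomial.coeff_add, Polynomial.coeff_C_mul_X_pow, if_pos rfl,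
    Polynomial.coeff_eq_zero_of_degree_lt (degree_X_pow_two_mul_lt hd x.2), add_zero]

theorem elementaryPoly_injective {d : ℕ} (hd : 2 ≤ d) :
    Function.Injective (elementaryPoly (K := K) d) := by
  intro x y h
  have h1 : x.1 = y.1 := by
    ext
    rw [← coeff_elementaryPoly hd, ← coeff_elementaryPoly hd, h]
  refine Prod.ext h1 ?_
  rw [elementaryPoly, elementaryPoly, h1, add_right_inj] at h
  have h2 := mul_left_cancel₀ (pow_ne_zero 2 Polynomial.X_ne_zero) h
  exact (Polynomial.degreeLTEquiv K (d - 2)).symm.injective (Subtype.ext h2)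

theorem exists_elementaryPoly_eq {h : Polynomial K} (hd : 2 ≤ h.natDegree)
    (hX : Polynomial.X ^ 2 ∣ h) : ∃ x, elementaryPoly h.natDegree x = h := by
  have h0 : h ≠ 0 := by rintro rfl; simp at hd
  have hdvd : Polynomial.X ^ 2 ∣ h.eraseLead := by
    rw [← Polynomial.self_sub_C_mul_X_pow]
    exact dvd_sub hX (Dvd.dvd.mul_left (pow_dvd_pow _ hd) _)
  obtain ⟨r, hr⟩ := hdvd
  have hr' : r ∈ Polynomial.degreeLT K (h.natDegree - 2) := by
    rw [Polynomial.mem_degreeLT]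
    by_cases hr0 : r = 0
    · rw [hr0, Polynomial.degree_zero]; exact WithBot.bot_lt_coe _
    rw [Polynomial.degree_lt_iff_coeff_zero]
    intro m hm
    have h1 : h.eraseLead.coeff (m + 2) = r.coeff m := by
      rw [hr, Polynomial.coeff_X_pow_mul]
    rw [← h1]
    by_cases h2 : m + 2 = h.natDegree
    · rw [h2, Polynomial.eraseLead_coeff_natDegree]
    · rw [Polynomial.eraseLead_coeff_of_ne _ h2]
      exact Polynomial.coeff_eq_zero_of_natDegree_lt (by omega)
  refine ⟨⟨Units.mk0 h.leadingCoeff (Polynomial.leadingCoeff_ne_zero.2 h0),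
    Polynomial.degreeLTEquiv K _ ⟨r, hr'⟩⟩, ?_⟩
  simp only [elementaryPoly, LinearEquiv.symm_apply_apply, Units.val_mk0]
  rw [← hr, add_comm, Polynomial.eraseLead_add_C_mul_X_pow]

end Parameters

section Affine

variable {K : Type*} [Field K]

/-- The affine automorphism with linear part `A` and translation part `v`. -/
noncomputable def affineAut (A : GL (Fin 2) K) (v : Fin 2 → K) : PlaneAut K :=
  AlgEquiv.ofAlgHom (aeval fun i => C (v i) + ∑ j, C (A.1 i j) * X j)
    (aeval fun i => ∑ j, C (A⁻¹.1 i j) * (X j - C (v j)))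
    (by
      apply MvPolynomial.algHom_ext
      intro i
      simp only [AlgHom.comp_apply, aeval_X, map_sum, map_mul, map_sub, ← algebraMap_eq,
        AlgHom.commutes, AlgHom.id_apply, add_sub_cancel_left]
      simp only [Finset.mul_sum, ← mul_assoc, ← map_mul]
      rw [Finset.sum_comm]
      simp only [← Finset.sum_mul, ← map_sum, ← Matrix.mul_apply, ← Units.val_mul, inv_mul_cancel]
      simp [Matrix.one_apply])
    (by
      apply MvPolynomial.algHom_ext
      intro i
      simp only [AlgHom.comp_apply, aeval_X, map_sum, map_mul, map_add, ← algebraMap_eq,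
        AlgHom.commutes, AlgHom.id_apply]
      simp only [Finset.mul_sum, ← mul_assoc, ← map_mul]
      rw [Finset.sum_comm]
      simp only [← Finset.sum_mul, ← map_sum, ← Matrix.mul_apply, ← Units.val_mul, mul_inv_cancel]
      simp [Matrix.one_apply])

theorem affineAut_X (A : GL (Fin 2) K) (v : Fin 2 → K) (i : Fin 2) :
    affineAut A v (X i) = C (v i) + ∑ j, C (A.1 i j) * X j := by
  simp [affineAut]

theorem autDeg_affineAut (A : GL (Fin 2) K) (v : Fin 2 → K) : autDeg (affineAut A v) = 1 := by
  have h : ∀ i, (affineAut A v (X i)).totalDegree ≤ 1 := fun i => by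
    rw [affineAut_X]
    refine (totalDegree_add _ _).trans (max_le (by simp) (totalDegree_finsetSum_le fun j _ => ?_))
    exact (totalDegree_mul _ _).trans (by simp)
  exact le_antisymm (max_le (h 0) (h 1)) (autDeg_pos _)

theorem eq_affine_of_totalDegree_le_one {P : MvPolynomial (Fin 2) K} (hP : P.totalDegree ≤ 1) :
    P = C (coeff 0 P) + ∑ j, C (coeff (Finsupp.single j 1) P) * X j := by
  ext d
  have h1 := fun h => (le_totalDegree (p := P) (s := d) (mem_support_iff.2 h)).trans hP
  rw [Finsupp.sum_fintype _ _ (by simp), Fin.sum_univ_two] at h1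
  simp only [coeff_add, coeff_C, coeff_C_mul, coeff_X, Fin.sum_univ_two]
  by_cases h2 : d 0 + d 1 ≤ 1
  · have h3 : d = 0 ∨ d = Finsupp.single 0 1 ∨ d = Finsupp.single 1 1 := by
      have h4 : (d 0 = 0 ∧ d 1 = 0) ∨ (d 0 = 1 ∧ d 1 = 0) ∨ (d 0 = 0 ∧ d 1 = 1) := by omega
      refine h4.imp ?_ (Or.imp ?_ ?_) <;>
      · rintro ⟨h5, h6⟩
        ext i; fin_cases i <;> simp [h5, h6]
    rcases h3 with rfl | rfl | rfl <;> simp [Finsupp.single_left_inj, eq_comm]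
  · have h3 : coeff d P = 0 := by by_contra h; exact h2 (h1 h)
    have h4 : (0 : Fin 2 →₀ ℕ) ≠ d := by rintro rfl; simp at h2
    have h5 : Finsupp.single (0 : Fin 2) 1 ≠ d := by rintro rfl; simp at h2
    have h6 : Finsupp.single (1 : Fin 2) 1 ≠ d := by rintro rfl; simp at h2
    simp [h3, h4, h5, h6]

theorem affineAut_bijective : Function.Bijective fun x : GL (Fin 2) K × (Fin 2 → K) =>
    (⟨affineAut x.1 x.2, autDeg_affineAut x.1 x.2⟩ : {φ : PlaneAut K // autDeg φ = 1}) := by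
  constructor
  · rintro ⟨A, v⟩ ⟨B, u⟩ h
    have h1 : affineAut A v = affineAut B u := congrArg Subtype.val h
    have h2 : ∀ (A : GL (Fin 2) K) (v : Fin 2 → K) i, coeff 0 (affineAut A v (X i)) = v i := by
      intro A v i
      rw [affineAut_X]
      simp [coeff_X, coeff_C_mul]
    have h3 : ∀ (A : GL (Fin 2) K) (v : Fin 2 → K) i j,
        coeff (Finsupp.single j 1) (affineAut A v (X i)) = A.1 i j := by
      intro A v i j
      rw [affineAut_X]
      simp only [coeff_add, coeff_C, coeff_sum, coeff_C_mul, coeff_X]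
      rw [if_neg (by simp [eq_comm]), zero_add, Finset.sum_eq_single j]
      · simp
      · intro b _ hb
        rw [if_neg (by simpa [Finsupp.single_left_inj] using hb), mul_zero]
      · simp
    refine Prod.ext (Units.ext (Matrix.ext fun i j => ?_)) (funext fun i => ?_)
    · rw [← h3 A v, ← h3 B u, h1]
    · change v i = u i
      rw [← h2 A v, ← h2 B u, h1]
  · rintro ⟨φ, hφ⟩
    have hdeg : ∀ i, (φ (X i)).totalDegree ≤ 1 := by
      have := max_le_iff.1 hφ.le
      intro i; fin_cases i
      exacts [this.1, this.2]
    let A : Matrix (Fin 2) (Fin 2) K := fun i j => coeff (Finsupp.single j 1) (φ (X i))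
    have hA : A.det ≠ 0 := by
      intro h
      obtain ⟨u, hu0, hu⟩ := Matrix.exists_vecMul_eq_zero_iff.2 h
      have h1 : φ (∑ i, C (u i) * X i) = φ (C (∑ i, u i * coeff 0 (φ (X i)))) := by
        have hC : ∀ c : K, φ (C c) = C c := fun c => by rw [← algebraMap_eq]; exact φ.commutes c
        rw [hC, map_sum]
        simp only [map_mul, hC]
        conv_lhs => enter [2, i]; rw [eq_affine_of_totalDegree_le_one (hdeg i), mul_add, ← C_mul]
        rw [Finset.sum_add_distrib, map_sum]
        simp only [Finset.mul_sum, ← mul_assoc, ← C_mul]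
        rw [Finset.sum_comm]
        simp only [← Finset.sum_mul, ← map_sum]
        rw [add_eq_left]
        refine Finset.sum_eq_zero fun j _ => ?_
        have := congrFun hu j
        simp only [Matrix.vecMul, dotProduct, A, Pi.zero_apply] at this
        rw [this, C_0, zero_mul]
      have h2 := φ.injective h1
      apply hu0
      funext j
      have h3 := congrArg (coeff (Finsupp.single j 1)) h2
      rw [coeff_C, if_neg (by simp [eq_comm]), coeff_sum, Finset.sum_eq_single j] at h3
      · simpa [coeff_C_mul] using h3
      · intro b _ hb
        rw [coeff_C_mul, coeff_X, if_neg (by simpa [Finsupp.single_left_inj] using hb), mul_zero]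
      · simp
    refine ⟨⟨Matrix.GeneralLinearGroup.mkOfDetNeZero A hA, fun i => coeff 0 (φ (X i))⟩, ?_⟩
    apply Subtype.ext
    have : ∀ i, affineAut (Matrix.GeneralLinearGroup.mkOfDetNeZero A hA)
        (fun i => coeff 0 (φ (X i))) (X i) = φ (X i) := fun i => by
      rw [affineAut_X]
      exact (eq_affine_of_totalDegree_le_one (hdeg i)).symm
    exact PlaneAut.ext (this 0) (this 1)

end Affine

section Counting

variable (F : Type*) [Field F] [Fintype F]

theorem card_elementaryPoly_parameters (d : ℕ) :
    Nat.card (Fˣ × (Fin (d - 2) → F)) = (Fintype.card F - 1) * Fintype.card F ^ (d - 2) := by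
  classical
  rw [Nat.card_prod, Nat.card_units, Nat.card_eq_fintype_card, Nat.card_fun,
    Nat.card_eq_fintype_card, Nat.card_eq_fintype_card, Fintype.card_fin]

theorem card_autDeg_eq_one : Nat.card {φ : PlaneAut F // autDeg φ = 1} =
    (Fintype.card F ^ 2 - 1) * (Fintype.card F ^ 2 - Fintype.card F) * Fintype.card F ^ 2 := by
  rw [← Nat.card_congr (Equiv.ofBijective _ affineAut_bijective), Nat.card_prod,
    Matrix.card_GL_field, Nat.card_fun, Nat.card_eq_fintype_card, Nat.card_eq_fintype_card,
    Fintype.card_fin, Fin.prod_univ_two]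
  simp

theorem finite_autDeg_le_and_card_le {n : ℕ} (hn : 2 ≤ n)
    (hfin : ∀ m < n, Finite {φ : PlaneAut F // autDeg φ = m}) :
    Finite {φ : PlaneAut F // autDeg φ = n} ∧
    Nat.card {φ : PlaneAut F // autDeg φ = n} ≤ ∑ m ∈ n.properDivisors,
      (Fintype.card F + 1) * ((Fintype.card F - 1) * Fintype.card F ^ (n / m - 2)) *
        Nat.card {φ : PlaneAut F // autDeg φ = m} := by
  obtain ⟨p, hp⟩ := CharP.exists F
  have : Fact p.Prime := ⟨CharP.char_is_prime F p⟩
  let T : n.properDivisors → Type _ := fun m =>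
    (Option F × (Fˣ × (Fin (n / m - 2) → F))) × {φ : PlaneAut F // autDeg φ = m}
  have hT : ∀ m, Finite (T m) := fun m => by
    have := hfin m (Nat.mem_properDivisors.1 m.2).2
    infer_instance
  let Ψ : (Σ m, T m) → PlaneAut F := fun x =>
    x.2.2.1 * elementaryAut (elementaryPoly (n / x.1) x.2.1.2) * lineAut x.2.1.1
  have hsub : {φ : PlaneAut F | autDeg φ = n} ⊆ Set.range Ψ := by
    rintro φ rfl
    obtain ⟨M, h, ψ, hφ, hX, hdeg, hlt⟩ := exists_decomposition p φ hn
    have h2 : 2 ≤ h.natDegree := by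
      by_contra hlt2
      have : h.natDegree * autDeg ψ ≤ 1 * autDeg ψ := Nat.mul_le_mul_right _ (by omega)
      omega
    have hdiv : autDeg φ / autDeg ψ = h.natDegree := by
      rw [hdeg, Nat.mul_div_cancel _ (autDeg_pos ψ)]
    obtain ⟨x, hx⟩ : ∃ x, elementaryPoly (autDeg φ / autDeg ψ) x = h := by
      rw [hdiv]; exact exists_elementaryPoly_eq h2 hX
    have hmem : autDeg ψ ∈ (autDeg φ).properDivisors :=
      Nat.mem_properDivisors.2 ⟨hdeg ▸ Dvd.intro_left _ rfl, hlt⟩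
    exact ⟨⟨⟨autDeg ψ, hmem⟩, ⟨⟨M, x⟩, ⟨ψ, rfl⟩⟩⟩, by simp only [Ψ]; rw [hx, ← hφ]⟩
  refine ⟨(Set.finite_range Ψ).subset hsub, ?_⟩
  refine (Nat.card_mono (Set.finite_range Ψ) hsub).trans ((Finite.card_range_le Ψ).trans ?_)
  rw [Nat.card_sigma, ← Finset.sum_coe_sort n.properDivisors]
  refine Finset.sum_le_sum fun m _ => le_of_eq ?_
  rw [Nat.card_prod, Nat.card_prod, card_elementaryPoly_parameters, Finite.card_option,
    Nat.card_eq_fintype_card (α := F)]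

theorem finite_autDeg_eq (n : ℕ) : Finite {φ : PlaneAut F // autDeg φ = n} := by
  induction n using Nat.strong_induction_on with
  | _ n ih =>
  rcases n with _ | _ | n
  · have : IsEmpty {φ : PlaneAut F // autDeg φ = 0} := ⟨fun φ => (autDeg_pos φ.1).ne' φ.2⟩
    infer_instance
  · exact Finite.of_equiv _ (Equiv.ofBijective _ affineAut_bijective)
  · exact (finite_autDeg_le_and_card_le F (by omega) ih).1

variable {F} in
theorem le_card_autDeg_eq {n : ℕ} (hn : 2 ≤ n) :
    (Fintype.card F + 1) * ((Fintype.card F - 1) * Fintype.card F ^ (n - 2)) *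
      Nat.card {φ : PlaneAut F // autDeg φ = 1} ≤ Nat.card {φ : PlaneAut F // autDeg φ = n} := by
  have := finite_autDeg_eq F n
  have hone : ∀ (ψ : PlaneAut F), autDeg ψ = 1 → ∀ i, (ψ (X i)).totalDegree = 1 := by
    intro ψ hψ i
    have h1 := max_le_iff.1 hψ.le
    have h2 := totalDegree_automorphism_X_ne_zero ψ i
    have h3 : (ψ (X i)).totalDegree ≤ 1 := by
      fin_cases i
      exacts [h1.1, h1.2]
    omega
  let E : (Fˣ × (Fin (n - 2) → F)) → PlaneAut F → PlaneAut F := fun x ψ =>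
    ψ * elementaryAut (elementaryPoly n x)
  have hE1 : ∀ x ψ, E x ψ (X 1) = ψ (X 1) := fun x ψ => mul_elementaryAut_X_one _ _
  have hE0 : ∀ x ψ, E x ψ (X 0) = ψ (X 0) + Polynomial.aeval (ψ (X 1)) (elementaryPoly n x) :=
    fun x ψ => mul_elementaryAut_X_zero _ _
  have hd1 : ∀ x ψ, autDeg ψ = 1 → (E x ψ (X 1)).totalDegree = 1 := fun x ψ hψ => by
    rw [hE1, hone ψ hψ]
  have hd0 : ∀ x ψ, autDeg ψ = 1 → (E x ψ (X 0)).totalDegree = n := fun x ψ hψ => by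
    have h1 : (Polynomial.aeval (ψ (X 1)) (elementaryPoly n x)).totalDegree = n := by
      rw [totalDegree_aeval_polynomial (totalDegree_automorphism_X_ne_zero ψ 1), hone ψ hψ,
        natDegree_elementaryPoly hn, mul_one]
    rw [hE0, totalDegree_add_eq_right_of_totalDegree_lt, h1]
    rw [h1, hone ψ hψ]
    omega
  have hEinj : ∀ x y ψ χ, autDeg ψ = 1 → autDeg χ = 1 → E x ψ = E y χ → x = y ∧ ψ = χ := by
    intro x y ψ χ hψ hχ h
    have h1 : ψ (X 1) = χ (X 1) := by rw [← hE1 x, h, hE1]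
    have h0 : ψ (X 0) + Polynomial.aeval (ψ (X 1)) (elementaryPoly n x) =
        χ (X 0) + Polynomial.aeval (ψ (X 1)) (elementaryPoly n y) := by
      rw [← hE0, h, hE0, h1]
    have h2 : Polynomial.aeval (ψ (X 1)) (elementaryPoly n x - elementaryPoly n y)
        = χ (X 0) - ψ (X 0) := by
      rw [map_sub]; linear_combination h0
    have h3 := totalDegree_aeval_polynomial (totalDegree_automorphism_X_ne_zero ψ 1)
      (elementaryPoly n x - elementaryPoly n y)
    have h4 := totalDegree_sub (χ (X 0)) (ψ (X 0))
    rw [← h2, h3, hone ψ hψ, hone ψ hψ, hone χ hχ, max_self, mul_one] at h4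
    have h5 : elementaryPoly n x - elementaryPoly n y = 0 := by
      by_contra hne
      have h6 := Polynomial.natDegree_le_of_dvd (dvd_sub (X_pow_two_dvd_elementaryPoly hn x)
        (X_pow_two_dvd_elementaryPoly hn y)) hne
      rw [Polynomial.natDegree_X_pow] at h6
      omega
    have h6 := elementaryPoly_injective hn (sub_eq_zero.1 h5)
    subst h6
    exact ⟨rfl, PlaneAut.ext (add_right_cancel h0) h1⟩
  have hdeg : ∀ M x ψ, autDeg ψ = 1 → autDeg (E x ψ * lineAut M) = n := by
    intro M x ψ hψ
    have h0 := hd0 x ψ hψ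
    have h1 := hd1 x ψ hψ
    rcases M with _ | c
    · rw [autDeg, mul_swap_X_zero, mul_swap_X_one, h0, h1]
      omega
    · rw [autDeg, mul_shear_X_zero, mul_shear_X_one, h0]
      apply max_eq_left
      refine (totalDegree_add _ _).trans (max_le (by omega) ?_)
      refine (totalDegree_mul _ _).trans ?_
      rw [totalDegree_C, h0, zero_add]
  let Φ : (Option F × (Fˣ × (Fin (n - 2) → F))) × {φ : PlaneAut F // autDeg φ = 1} →
      {φ : PlaneAut F // autDeg φ = n} := fun x =>
    ⟨E x.1.2 x.2.1 * lineAut x.1.1, hdeg _ _ _ x.2.2⟩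
  have hΦ : Function.Injective Φ := by
    rintro ⟨⟨M, x⟩, ⟨ψ, hψ⟩⟩ ⟨⟨N, y⟩, ⟨χ, hχ⟩⟩ h
    replace h : E x ψ * lineAut M = E y χ * lineAut N := congrArg Subtype.val h
    have hMN : M = N := by
      have e0 := DFunLike.congr_fun h (X 0)
      have e1 := DFunLike.congr_fun h (X 1)
      have hx0 := hd0 x ψ hψ
      have hx1 := hd1 x ψ hψ
      have hy0 := hd0 y χ hχ
      have hy1 := hd1 y χ hχ
      rcases M with _ | c <;> rcases N with _ | c'
      · rfl
      · rw [mul_swap_X_zero, mul_shear_X_zero] at e0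
        rw [e0] at hx1
        omega
      · rw [mul_swap_X_zero, mul_shear_X_zero] at e0
        rw [e0] at hx0
        omega
      · rw [mul_shear_X_zero, mul_shear_X_zero] at e0
        rw [mul_shear_X_one, mul_shear_X_one, e0] at e1
        by_contra hne
        have hcc : c - c' ≠ 0 := fun h => hne (by rw [sub_eq_zero.1 h])
        have e2 : C (c - c') * E y χ (X 0) = E y χ (X 1) - E x ψ (X 1) := by
          rw [C_sub]; linear_combination e1
        have e3 := congrArg totalDegree e2
        have hE0' : E y χ (X 0) ≠ 0 := fun h => by rw [h, totalDegree_zero] at hy0; omega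
        rw [totalDegree_mul_of_isDomain ((map_ne_zero_iff _ (C_injective _ _)).2 hcc) hE0', totalDegree_C, hy0] at e3
        have e4 := totalDegree_sub (E y χ (X 1)) (E x ψ (X 1))
        rw [hy1, hx1, max_self] at e4
        omega
    subst hMN
    obtain ⟨rfl, rfl⟩ := hEinj x y ψ χ hψ hχ (mul_right_cancel h)
    rfl
  have := Nat.card_le_card_of_injective Φ hΦ
  rwa [Nat.card_prod, Nat.card_prod, card_elementaryPoly_parameters, Finite.card_option,
    Nat.card_eq_fintype_card (α := F)] at this

end Counting

section Factorizations

open ArithmeticFunction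

theorem sum_divisors_pow_cardFactors_le (x : ℕ) (n : ℕ) (hn : n ≠ 0) :
    ∑ d ∈ n.divisors, x ^ cardFactors d ≤ (x + 1) ^ cardFactors n := by
  classical
  induction n using induction_on_primes with
  | zero => exact absurd rfl hn
  | one => simp
  | prime_mul p a hp ih =>
    have ha : a ≠ 0 := right_ne_zero_of_mul hn
    have hsub : (p * a).divisors ⊆ a.divisors ∪ a.divisors.image (p * ·) := by
      intro d hd
      have hd' := Nat.dvd_of_mem_divisors hd
      rw [Finset.mem_union, Finset.mem_image]
      by_cases hpd : p ∣ d
      · obtain ⟨e, rfl⟩ := hpd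
        exact Or.inr ⟨e, Nat.mem_divisors.2 ⟨Nat.dvd_of_mul_dvd_mul_left hp.pos hd', ha⟩, rfl⟩
      · refine Or.inl (Nat.mem_divisors.2 ⟨?_, ha⟩)
        exact ((Nat.Prime.coprime_iff_not_dvd hp).2 hpd).symm.dvd_of_dvd_mul_left hd'
    calc ∑ d ∈ (p * a).divisors, x ^ cardFactors d
        ≤ ∑ d ∈ a.divisors ∪ a.divisors.image (p * ·), x ^ cardFactors d :=
          Finset.sum_le_sum_of_subset hsub
      _ ≤ ∑ d ∈ a.divisors, x ^ cardFactors d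
          + ∑ d ∈ a.divisors.image (p * ·), x ^ cardFactors d := by
          rw [← Finset.sum_union_inter]; exact Nat.le_add_right _ _
      _ = ∑ d ∈ a.divisors, x ^ cardFactors d + x * ∑ d ∈ a.divisors, x ^ cardFactors d := by
          rw [Finset.sum_image fun _ _ _ _ h => Nat.eq_of_mul_eq_mul_left hp.pos h, Finset.mul_sum]
          congr 1
          refine Finset.sum_congr rfl fun d hd => ?_
          rw [cardFactors_mul hp.ne_zero (Nat.pos_of_mem_divisors hd).ne',
            cardFactors_apply_prime hp, pow_add, pow_one]
      _ = (x + 1) * ∑ d ∈ a.divisors, x ^ cardFactors d := by ring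
      _ ≤ (x + 1) * (x + 1) ^ cardFactors a := Nat.mul_le_mul_left _ (ih ha)
      _ = (x + 1) ^ cardFactors (p * a) := by
          rw [cardFactors_mul hp.ne_zero ha, cardFactors_apply_prime hp, pow_add, pow_one]

theorem sum_properDivisors_cardFactors_pow_le {n : ℕ} (hn : 2 ≤ n) :
    ∑ m ∈ n.properDivisors, cardFactors m ^ cardFactors m ≤ cardFactors n ^ cardFactors n := by
  have h1 : cardFactors n ≠ 0 := by
    rw [Ne, cardFactors_eq_zero_iff_eq_zero_or_one]; omega
  calc ∑ m ∈ n.properDivisors, cardFactors m ^ cardFactors m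
      ≤ ∑ m ∈ n.properDivisors, (cardFactors n - 1) ^ cardFactors m := by
        refine Finset.sum_le_sum fun m hm => Nat.pow_le_pow_left ?_ _
        obtain ⟨⟨d, rfl⟩, hlt⟩ := Nat.mem_properDivisors.1 hm
        have hm0 : m ≠ 0 := by rintro rfl; omega
        have hd0 : d ≠ 0 := by rintro rfl; omega
        rw [cardFactors_mul hm0 hd0]
        have : cardFactors d ≠ 0 := by
          rw [Ne, cardFactors_eq_zero_iff_eq_zero_or_one]
          rintro (h | rfl)
          · exact hd0 h
          · omega
        omega
    _ ≤ ∑ m ∈ n.divisors, (cardFactors n - 1) ^ cardFactors m :=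
        Finset.sum_le_sum_of_subset (Nat.properDivisors_subset_divisors)
    _ ≤ (cardFactors n - 1 + 1) ^ cardFactors n :=
        sum_divisors_pow_cardFactors_le _ n (by omega)
    _ = cardFactors n ^ cardFactors n := by rw [Nat.sub_add_cancel (by omega)]

theorem cardFactors_le_log_two {n : ℕ} (hn : n ≠ 0) : cardFactors n ≤ Nat.log 2 n := by
  apply Nat.le_log_of_pow_le one_lt_two
  induction n using induction_on_primes with
  | zero => exact absurd rfl hn
  | one => simp
  | prime_mul p a hp ih =>
    have ha : a ≠ 0 := right_ne_zero_of_mul hn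
    rw [cardFactors_mul hp.ne_zero ha, cardFactors_apply_prime hp, pow_add, pow_one]
    exact Nat.mul_le_mul hp.two_le (ih ha)

end Factorizations

section Estimates

open ArithmeticFunction

variable (F : Type*) [Field F] [Fintype F]

theorem succ_mul_pred_mul_pow_le (q : ℕ) {d : ℕ} (hd : 2 ≤ d) :
    (q + 1) * ((q - 1) * q ^ (d - 2)) ≤ q ^ d := by
  have h : (q + 1) * (q - 1) ≤ q ^ 2 := by
    rw [← Nat.sq_sub_sq, one_pow]; exact Nat.sub_le _ _
  calc (q + 1) * ((q - 1) * q ^ (d - 2)) = (q + 1) * (q - 1) * q ^ (d - 2) := by ring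
    _ ≤ q ^ 2 * q ^ (d - 2) := Nat.mul_le_mul_right _ h
    _ = q ^ d := by rw [← pow_add]; congr 1; omega

theorem card_autDeg_eq_one_le :
    Nat.card {φ : PlaneAut F // autDeg φ = 1} ≤ Fintype.card F ^ 6 := by
  rw [card_autDeg_eq_one]
  calc (Fintype.card F ^ 2 - 1) * (Fintype.card F ^ 2 - Fintype.card F) * Fintype.card F ^ 2
      ≤ Fintype.card F ^ 2 * Fintype.card F ^ 2 * Fintype.card F ^ 2 :=
        Nat.mul_le_mul_right _ (Nat.mul_le_mul (Nat.sub_le _ _) (Nat.sub_le _ _))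
    _ = Fintype.card F ^ 6 := by ring

theorem card_autDeg_eq_le {n : ℕ} (hn : n ≠ 0) : Nat.card {φ : PlaneAut F // autDeg φ = n} ≤
    cardFactors n ^ cardFactors n * Fintype.card F ^ (n + 6) := by
  have hq : 0 < Fintype.card F := Fintype.card_pos
  induction n using Nat.strong_induction_on with
  | _ n ih =>
  by_cases hn1 : n = 1
  · subst hn1
    simpa using (card_autDeg_eq_one_le F).trans (Nat.pow_le_pow_right hq (by norm_num))
  have hn2 : 2 ≤ n := by omega
  refine (finite_autDeg_le_and_card_le F hn2 fun m _ => finite_autDeg_eq F m).2.trans ?_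
  refine le_trans ?_ (Nat.mul_le_mul_right _ (sum_properDivisors_cardFactors_pow_le hn2))
  rw [Finset.sum_mul]
  refine Finset.sum_le_sum fun m hm => ?_
  obtain ⟨⟨d, rfl⟩, hlt⟩ := Nat.mem_properDivisors.1 hm
  have hm0 : m ≠ 0 := by rintro rfl; omega
  have hd2 : 2 ≤ d := by
    by_contra h
    have : m * d ≤ m * 1 := Nat.mul_le_mul_left _ (by omega)
    omega
  rw [Nat.mul_div_cancel_left _ (Nat.pos_of_ne_zero hm0)]
  by_cases hm1 : m = 1
  · subst hm1
    calc _ ≤ Fintype.card F ^ d * Fintype.card F ^ 6 :=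
          Nat.mul_le_mul (succ_mul_pred_mul_pow_le _ hd2) (card_autDeg_eq_one_le F)
      _ = _ := by simp [pow_add]
  · calc _ ≤ Fintype.card F ^ d *
            (cardFactors m ^ cardFactors m * Fintype.card F ^ (m + 6)) :=
          Nat.mul_le_mul (succ_mul_pred_mul_pow_le _ hd2) (ih m hlt hm0)
      _ = cardFactors m ^ cardFactors m * Fintype.card F ^ (m + d + 6) := by ring
      _ ≤ _ := by
          refine Nat.mul_le_mul_left _ (Nat.pow_le_pow_right hq ?_)
          have := Nat.add_le_mul (show 2 ≤ m by omega) hd2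
          omega

theorem main_term_eq {n : ℕ} (hn : 2 ≤ n) :
    (((Fintype.card F + 1) * ((Fintype.card F - 1) * Fintype.card F ^ (n - 2)) *
      Nat.card {φ : PlaneAut F // autDeg φ = 1} : ℕ) : ℝ) =
    ((Fintype.card F : ℝ) - 1) ^ 3 * ((Fintype.card F : ℝ) + 1) ^ 2 *
      (Fintype.card F : ℝ) ^ (n + 1) := by
  have hq : 1 ≤ Fintype.card F := Fintype.card_pos
  obtain ⟨k, rfl⟩ := Nat.exists_eq_add_of_le' hn
  rw [card_autDeg_eq_one]
  push_cast [Nat.cast_sub hq, Nat.cast_sub (Nat.one_le_pow 2 _ hq),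
    Nat.cast_sub (Nat.le_self_pow two_ne_zero (Fintype.card F)), Nat.add_sub_cancel]
  ring

theorem sum_error_terms_le {n : ℕ} (hn : 2 ≤ n) :
    ((∑ m ∈ n.properDivisors.erase 1,
      (Fintype.card F + 1) * ((Fintype.card F - 1) * Fintype.card F ^ (n / m - 2)) *
        Nat.card {φ : PlaneAut F // autDeg φ = m} : ℕ) : ℝ) ≤
    (Nat.log 2 n : ℝ) ^ (Nat.log 2 n) * (Fintype.card F : ℝ) ^ ((n : ℝ) / 2 + 8) := by
  have hq : (1 : ℝ) ≤ Fintype.card F := by exact_mod_cast (Fintype.card_pos : 0 < Fintype.card F)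
  have hterm : ∀ m ∈ n.properDivisors.erase 1,
      (((Fintype.card F + 1) * ((Fintype.card F - 1) * Fintype.card F ^ (n / m - 2)) *
        Nat.card {φ : PlaneAut F // autDeg φ = m} : ℕ) : ℝ) ≤
      ((cardFactors m ^ cardFactors m : ℕ) : ℝ) * (Fintype.card F : ℝ) ^ ((n : ℝ) / 2 + 8) := by
    intro m hm
    obtain ⟨hm1, hm⟩ := Finset.mem_erase.1 hm
    obtain ⟨⟨d, rfl⟩, hlt⟩ := Nat.mem_properDivisors.1 hm
    have hm0 : m ≠ 0 := by rintro rfl; omega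
    have hd2 : 2 ≤ d := by
      by_contra h
      have : m * d ≤ m * 1 := Nat.mul_le_mul_left _ (by omega)
      omega
    rw [Nat.mul_div_cancel_left _ (Nat.pos_of_ne_zero hm0)]
    have h1 := Nat.mul_le_mul (succ_mul_pred_mul_pow_le (Fintype.card F) hd2)
      (card_autDeg_eq_le F hm0)
    have h2 : Fintype.card F ^ d * (cardFactors m ^ cardFactors m * Fintype.card F ^ (m + 6))
        = cardFactors m ^ cardFactors m * Fintype.card F ^ (m + d + 6) := by ring
    rw [h2] at h1
    refine (Nat.cast_le.2 h1).trans ?_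
    rw [Nat.cast_mul]
    refine mul_le_mul_of_nonneg_left ?_ (Nat.cast_nonneg _)
    rw [Nat.cast_pow, ← Real.rpow_natCast]
    refine Real.rpow_le_rpow_of_exponent_le hq ?_
    push_cast
    have hmr : (2 : ℝ) ≤ m := by exact_mod_cast (show 2 ≤ m by omega)
    have hdr : (2 : ℝ) ≤ d := by exact_mod_cast hd2
    nlinarith [mul_nonneg (sub_nonneg.2 hmr) (sub_nonneg.2 hdr)]
  rw [Nat.cast_sum]
  refine (Finset.sum_le_sum hterm).trans ?_
  rw [← Finset.sum_mul, ← Nat.cast_sum]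
  refine mul_le_mul_of_nonneg_right ?_ (Real.rpow_nonneg (by linarith) _)
  have h1 : ∑ m ∈ n.properDivisors.erase 1, cardFactors m ^ cardFactors m ≤
      Nat.log 2 n ^ Nat.log 2 n :=
    ((Finset.sum_le_sum_of_subset (Finset.erase_subset _ _)).trans
      (sum_properDivisors_cardFactors_pow_le hn)).trans
      (Nat.pow_self_mono (cardFactors_le_log_two (by omega)))
  exact_mod_cast h1

end Estimates

/-- For `n ≥ 2`, the number `p_n` of automorphisms of `𝔽_q[x,y]` of degree `n` satisfies
`(q−1)³(q+1)²q^(n+1) ≤ p_n ≤ (q−1)³(q+1)²q^(n+1) + (log₂ n)^(log₂ n) q^(n/2+8)`. -/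
theorem stmt_12 (F : Type*) [Field F] [Fintype F] (q : ℕ) (hq : q = Fintype.card F)
    (n : ℕ) (hn : 2 ≤ n) :
    (((q : ℝ) - 1) ^ 3 * ((q : ℝ) + 1) ^ 2 * (q : ℝ) ^ (n + 1)
        ≤ (Nat.card {φ : MvPolynomial (Fin 2) F ≃ₐ[F] MvPolynomial (Fin 2) F // autDeg φ = n} : ℝ)) ∧
    ((Nat.card {φ : MvPolynomial (Fin 2) F ≃ₐ[F] MvPolynomial (Fin 2) F // autDeg φ = n} : ℝ)
        ≤ ((q : ℝ) - 1) ^ 3 * ((q : ℝ) + 1) ^ 2 * (q : ℝ) ^ (n + 1)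
          + (Nat.log 2 n : ℝ) ^ (Nat.log 2 n) * (q : ℝ) ^ ((n : ℝ) / 2 + 8)) := by
  subst hq
  rw [← main_term_eq F hn]
  refine ⟨Nat.cast_le.2 (le_card_autDeg_eq hn), ?_⟩
  refine le_trans ?_ (add_le_add_right (sum_error_terms_le F hn) _)
  rw [← Nat.cast_add, Nat.cast_le]
  refine (finite_autDeg_le_and_card_le F hn fun m _ => finite_autDeg_eq F m).2.trans ?_
  have h1 : 1 ∈ n.properDivisors := Nat.one_mem_properDivisors_iff_one_lt.2 hn
  rw [← Finset.add_sum_erase _ _ h1, Nat.div_one]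
end

section
/- In the free Lie algebra on two generators x, y over a field, every homogeneous element of degree n ≥ 2 lying in the subalgebra generated by a single element of degree 1 is zero; consequently, every automorphism of the free Lie algebra of rank 2 defined over a field is linear (degree 1). -/
namespace LieStraightening

open Module

section Words

variable {I : Type*} [LinearOrder I]

/-- The number of inversions of a word. -/
def inversions : List I → ℕ
  | [] => 0
  | a :: w => w.countP (· < a) + inversions w

theorem inversions_swap_lt (s t : List I) {i j : I} (h : i < j) :
    inversions (s ++ i :: j :: t) < inversions (s ++ j :: i :: t) := by
  induction s with
  | nil =>
    simp only [List.nil_append, inversions, List.countP_cons, h, h.not_gt, decide_true,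
      decide_false]
    simp
    omega
  | cons a s ih =>
    simp only [List.cons_append, inversions, List.countP_append, List.countP_cons]
    omega

end Words

variable {R L I : Type*} [CommRing R] [LieRing L] [LieAlgebra R L] [LinearOrder I]

open Classical in
/-- The normal form of a word in the basis elements, obtained by repeatedly replacing a descent
`j i` by `i j` plus the expansion of `⁅b j, b i⁆`. -/
noncomputable def straighten (b : Basis I R L) (w : List I) : List I →₀ R :=
  if h : ∃ p : List I × I × I × List I, p.2.2.1 < p.2.1 ∧ w = p.1 ++ p.2.1 :: p.2.2.1 :: p.2.2.2
  then
    straighten b (h.choose.1 ++ h.choose.2.2.1 :: h.choose.2.1 :: h.choose.2.2.2) +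
      (b.repr ⁅b h.choose.2.1, b h.choose.2.2.1⁆).sum fun k a =>
        a • straighten b (h.choose.1 ++ k :: h.choose.2.2.2)
  else Finsupp.single w 1
termination_by (w.length, inversions w)
decreasing_by
  · obtain ⟨h₁, h₂⟩ := h.choose_spec
    conv_rhs => rw [h₂]
    have := inversions_swap_lt h.choose.1 h.choose.2.2.2 h₁
    simp only [List.length_append, List.length_cons]
    exact Prod.Lex.right _ this
  · conv_rhs => rw [h.choose_spec.2]
    apply Prod.Lex.left
    simp

/-- The linear combination of the values of `f` on the words `s ++ k :: t` whose coefficients are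
those of an element of `L` on the basis. -/
noncomputable def insertion {M : Type*} [AddCommGroup M] [Module R M] (b : Basis I R L)
    (f : List I → M) (s t : List I) : L →ₗ[R] M :=
  b.constr R fun k => f (s ++ k :: t)

section insertion

variable {M : Type*} [AddCommGroup M] [Module R M] (b : Basis I R L) (f : List I → M)

omit [LinearOrder I] in
@[simp]
theorem insertion_basis (s t : List I) (k : I) : insertion b f s t (b k) = f (s ++ k :: t) := by
  simp [insertion]

/-- `f` is compatible with swapping the letters at any descent of `w`. -/
def Swaps (w : List I) : Prop :=
  ∀ s j i t, i < j → w = s ++ j :: i :: t →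
    f w = f (s ++ i :: j :: t) + insertion b f s t ⁅b j, b i⁆

variable {b f}

theorem Swaps.sub_eq {n : ℕ} (H : ∀ w : List I, w.length < n → Swaps b f w) (s : List I) (j i : I)
    (t : List I) (hn : (s ++ j :: i :: t).length < n) :
    f (s ++ j :: i :: t) - f (s ++ i :: j :: t) = insertion b f s t ⁅b j, b i⁆ := by
  rcases lt_trichotomy i j with h | rfl | h
  · rw [H _ hn s j i t h rfl, add_sub_cancel_left]
  · simp
  · rw [H (s ++ i :: j :: t) (by simpa using hn) s i j t h rfl, ← lie_skew (b j), map_neg]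
    abel

theorem Swaps.insertion_sub {n : ℕ} (H : ∀ w : List I, w.length < n → Swaps b f w) (s : List I)
    (i : I) (t : List I) (hn : (s ++ i :: i :: t).length < n) (v : L) :
    insertion b f s (i :: t) v - insertion b f (s ++ [i]) t v = insertion b f s t ⁅v, b i⁆ := by
  have : insertion b f s (i :: t) - insertion b f (s ++ [i]) t =
      -(insertion b f s t ∘ₗ (LieAlgebra.ad R L (b i) : L →ₗ[R] L)) := by
    refine b.ext fun k => ?_
    have := Swaps.sub_eq H s k i t (by simpa using hn)
    rw [← lie_skew, map_neg] at this
    simpa using this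
  rw [← lie_skew, map_neg]
  simpa using LinearMap.congr_fun this v

theorem Swaps.overlap {w : List I} (H : ∀ w' : List I, w'.length < w.length → Swaps b f w')
    (H' : ∀ w' : List I, w'.length = w.length → inversions w' < inversions w → Swaps b f w')
    {s t : List I} {i j k : I} (hw : w = s ++ k :: j :: i :: t) (hij : i < j) (hjk : j < k) :
    f (s ++ j :: k :: i :: t) + insertion b f s (i :: t) ⁅b k, b j⁆ =
      f (s ++ k :: i :: j :: t) + insertion b f (s ++ [k]) t ⁅b j, b i⁆ := by
  subst hw
  have hik := hij.trans hjk
  have i₁ := inversions_swap_lt s (i :: t) hjk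
  have i₂ := inversions_swap_lt (s ++ [j]) t hik
  have i₃ := inversions_swap_lt (s ++ [k]) t hij
  have i₄ := inversions_swap_lt s (j :: t) hik
  simp only [List.append_assoc, List.cons_append, List.nil_append] at i₁ i₂ i₃ i₄
  have e₁ := H' (s ++ j :: k :: i :: t) (by simp) i₁ (s ++ [j]) k i t hik (by simp)
  have e₂ := H' (s ++ j :: i :: k :: t) (by simp) (i₂.trans i₁) s j i (k :: t) hij rfl
  have e₃ := H' (s ++ k :: i :: j :: t) (by simp) i₃ s k i (j :: t) hik rfl
  have e₄ := H' (s ++ i :: k :: j :: t) (by simp) (i₄.trans i₃) (s ++ [i]) k j t hjk (by simp)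
  have d₁ := Swaps.insertion_sub H s i t (by simp) ⁅b k, b j⁆
  have d₂ := Swaps.insertion_sub H s j t (by simp) ⁅b k, b i⁆
  have d₃ := Swaps.insertion_sub H s k t (by simp) ⁅b j, b i⁆
  have jac : ⁅⁅b k, b j⁆, b i⁆ = ⁅⁅b k, b i⁆, b j⁆ - ⁅⁅b j, b i⁆, b k⁆ := by
    rw [lie_lie (b k) (b j) (b i), ← lie_skew (b k) ⁅b j, b i⁆, ← lie_skew (b j) ⁅b k, b i⁆]
    abel
  rw [jac, map_sub, ← d₂, ← d₃, sub_eq_iff_eq_add] at d₁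
  simp only [List.append_assoc, List.cons_append, List.nil_append] at e₁ e₄
  rw [e₁, e₂, e₃, e₄, d₁]
  abel

theorem Swaps.disjoint {w : List I} (H : ∀ w' : List I, w'.length < w.length → Swaps b f w')
    (H' : ∀ w' : List I, w'.length = w.length → inversions w' < inversions w → Swaps b f w')
    {s m t : List I} {i j i' j' : I} (hw : w = s ++ j :: i :: (m ++ j' :: i' :: t)) (h : i < j)
    (h' : i' < j') :
    f (s ++ i :: j :: (m ++ j' :: i' :: t)) + insertion b f s (m ++ j' :: i' :: t) ⁅b j, b i⁆ =
      f (s ++ j :: i :: (m ++ i' :: j' :: t)) +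
        insertion b f (s ++ j :: i :: m) t ⁅b j', b i'⁆ := by
  subst hw
  have i₁ := inversions_swap_lt s (m ++ j' :: i' :: t) h
  have i₂ := inversions_swap_lt (s ++ j :: i :: m) t h'
  simp only [List.append_assoc, List.cons_append] at i₁ i₂
  have e₁ := H' (s ++ i :: j :: (m ++ j' :: i' :: t)) (by simp) i₁ (s ++ i :: j :: m) j' i' t h'
    (by simp)
  have e₂ := H' (s ++ j :: i :: (m ++ i' :: j' :: t)) (by simp) i₂ s j i (m ++ i' :: j' :: t) h
    (by simp)
  have d₁ : insertion b f s (m ++ j' :: i' :: t) = insertion b f s (m ++ i' :: j' :: t) +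
      (b.constr R fun k => insertion b f (s ++ k :: m) t : L →ₗ[R] L →ₗ[R] M).flip ⁅b j', b i'⁆ := by
    refine b.ext fun k => ?_
    have := Swaps.sub_eq H (s ++ k :: m) j' i' t (by simp)
    simp only [List.append_assoc, List.cons_append] at this
    simp [← this]
  have d₂ : insertion b f (s ++ j :: i :: m) t = insertion b f (s ++ i :: j :: m) t +
      (b.constr R fun k => insertion b f (s ++ k :: m) t : L →ₗ[R] L →ₗ[R] M) ⁅b j, b i⁆ := by
    refine b.ext fun k => ?_
    have key : ((b.constr R fun k => insertion b f (s ++ k :: m) t :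
        L →ₗ[R] L →ₗ[R] M).flip (b k)) = insertion b f s (m ++ k :: t) := by
      refine b.ext fun l => ?_
      simp
    have := Swaps.sub_eq H s j i (m ++ k :: t) (by simp)
    rw [← key, LinearMap.flip_apply] at this
    simp [← this]
  rw [e₁, e₂, d₁, d₂]
  simp only [List.append_assoc, List.cons_append, LinearMap.add_apply, LinearMap.flip_apply]
  abel

theorem Swaps.confluent {w : List I} (H : ∀ w' : List I, w'.length < w.length → Swaps b f w')
    (H' : ∀ w' : List I, w'.length = w.length → inversions w' < inversions w → Swaps b f w')
    {s t s' t' : List I} {i j i' j' : I} (hw : w = s ++ j :: i :: t)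
    (hw' : w = s' ++ j' :: i' :: t') (h : i < j) (h' : i' < j') :
    f (s ++ i :: j :: t) + insertion b f s t ⁅b j, b i⁆ =
      f (s' ++ i' :: j' :: t') + insertion b f s' t' ⁅b j', b i'⁆ := by
  wlog hss : s.length ≤ s'.length generalizing s t s' t' i j i' j'
  · exact (this hw' hw h' h (by omega)).symm
  obtain ⟨m, rfl, hm⟩ | ⟨m, rfl, hm⟩ := List.append_eq_append_iff.1 (hw.symm.trans hw')
  · match m, hm with
    | [], hm =>
      simp only [List.nil_append, List.cons.injEq] at hm
      obtain ⟨rfl, rfl, rfl⟩ := hm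
      simp
    | [a], hm =>
      simp only [List.cons_append, List.nil_append, List.cons.injEq] at hm
      obtain ⟨rfl, rfl, rfl⟩ := hm
      simpa using Swaps.overlap H H' hw h' h
    | a :: c :: m, hm =>
      simp only [List.cons_append, List.cons.injEq] at hm
      obtain ⟨rfl, rfl, rfl⟩ := hm
      simpa using Swaps.disjoint H H' hw h h'
  · obtain rfl : m = [] := by simpa using hss
    simp only [List.nil_append, List.cons.injEq] at hm
    obtain ⟨rfl, rfl, rfl⟩ := hm
    simp

end insertion

variable (b : Basis I R L)

theorem straighten_eq_single {w : List I} (hw : ∀ s j i t, i < j → w ≠ s ++ j :: i :: t) :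
    straighten b w = Finsupp.single w 1 := by
  rw [straighten, dif_neg]
  rintro ⟨⟨s, j, i, t⟩, h, h'⟩
  exact hw s j i t h h'

theorem exists_straighten_eq {w : List I} (hw : ∃ s j i t, i < j ∧ w = s ++ j :: i :: t) :
    ∃ s j i t, i < j ∧ w = s ++ j :: i :: t ∧ straighten b w =
      straighten b (s ++ i :: j :: t) + insertion b (straighten b) s t ⁅b j, b i⁆ := by
  have h : ∃ p : List I × I × I × List I,
      p.2.2.1 < p.2.1 ∧ w = p.1 ++ p.2.1 :: p.2.2.1 :: p.2.2.2 := by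
    obtain ⟨s, j, i, t, h⟩ := hw
    exact ⟨⟨s, j, i, t⟩, h⟩
  refine ⟨_, _, _, _, h.choose_spec.1, h.choose_spec.2, ?_⟩
  rw [straighten, dif_pos h, insertion, Basis.constr_apply]

theorem straighten_swaps (w : List I) : Swaps b (straighten b) w := by
  induction hn : w.length using Nat.strong_induction_on generalizing w with
  | _ n ih =>
    induction hk : inversions w using Nat.strong_induction_on generalizing w with
    | _ k ih' =>
      intro s j i t h hw
      obtain ⟨s', j', i', t', h', hw', e⟩ := exists_straighten_eq b ⟨s, j, i, t, h, hw⟩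
      rw [e]
      refine Swaps.confluent (w := w) (fun w' h => ih _ (hn ▸ h) w' rfl)
        (fun w' h h' => ih' _ (hk ▸ h') w' (h.trans hn) rfl) hw' hw h' h

theorem straighten_sub (s : List I) (j i : I) (t : List I) :
    straighten b (s ++ j :: i :: t) - straighten b (s ++ i :: j :: t) =
      insertion b (straighten b) s t ⁅b j, b i⁆ :=
  Swaps.sub_eq (fun w _ => straighten_swaps b w) s j i t (Nat.lt_succ_self _)

theorem straighten_append_top {i₀ : I} (h₀ : ∀ i, i ≤ i₀) (w : List I) :
    straighten b (w ++ [i₀]) = (straighten b w).mapDomain (· ++ [i₀]) := by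
  induction hn : w.length using Nat.strong_induction_on generalizing w with
  | _ n ih =>
    induction hk : inversions w using Nat.strong_induction_on generalizing w with
    | _ k ih' =>
      by_cases hw : ∃ s j i t, i < j ∧ w = s ++ j :: i :: t
      · obtain ⟨s, j, i, t, h, rfl⟩ := hw
        have e := straighten_swaps b _ s j i (t ++ [i₀]) h rfl
        have e' := straighten_swaps b _ s j i t h rfl
        have e₁ := ih' _ (hk ▸ inversions_swap_lt s t h) (s ++ i :: j :: t)
          (by simpa using hn) rfl
        have e₂ : insertion b (straighten b) s (t ++ [i₀]) =
            Finsupp.lmapDomain R R (· ++ [i₀]) ∘ₗ insertion b (straighten b) s t := by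
          refine b.ext fun k => ?_
          simpa using ih (s ++ k :: t).length (by simp [← hn]) _ rfl
        simp only [List.append_assoc, List.cons_append] at e e₁ ⊢
        rw [e, e', e₁, e₂, Finsupp.mapDomain_add]
        rfl
      · push Not at hw
        rw [straighten_eq_single b hw, straighten_eq_single, Finsupp.mapDomain_single]
        intro s j i t h hw'
        rcases List.eq_nil_or_concat t with rfl | ⟨t, k, rfl⟩
        · have : w ++ [i₀] = (s ++ [j]) ++ [i] := by simpa using hw'
          obtain ⟨-, rfl⟩ := List.append_inj' this rfl |>.imp_right List.singleton_inj.1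
          exact (h₀ j).not_gt h
        · have : w ++ [i₀] = (s ++ j :: i :: t) ++ [k] := by simpa using hw'
          exact hw s j i t h (List.append_inj' this rfl).1

/-- The relations between words which hold in the enveloping algebra. -/
noncomputable def relations : Submodule R (List I →₀ R) :=
  Submodule.span R (Set.range fun p : List I × I × I × List I =>
    Finsupp.single (p.1 ++ p.2.1 :: p.2.2.1 :: p.2.2.2) 1 -
      Finsupp.single (p.1 ++ p.2.2.1 :: p.2.1 :: p.2.2.2) 1 -
      insertion b (fun w => Finsupp.single w 1) p.1 p.2.2.2 ⁅b p.2.1, b p.2.2.1⁆)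

omit [LinearOrder I] in
theorem map_insertion {M N : Type*} [AddCommGroup M] [Module R M] [AddCommGroup N] [Module R N]
    (g : M →ₗ[R] N) (f : List I → M) (s t : List I) (v : L) :
    g (insertion b f s t v) = insertion b (fun w => g (f w)) s t v := by
  have : g ∘ₗ insertion b f s t = insertion b (fun w => g (f w)) s t := b.ext fun k => by simp
  exact LinearMap.congr_fun this v

omit [LinearOrder I] in
theorem single_sub_single_sub_insertion_mem (s : List I) (j i : I) (t : List I) :
    Finsupp.single (s ++ j :: i :: t) 1 - Finsupp.single (s ++ i :: j :: t) 1 -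
      insertion b (fun w => Finsupp.single w 1) s t ⁅b j, b i⁆ ∈ relations b :=
  Submodule.subset_span ⟨(s, j, i, t), rfl⟩

omit [LinearOrder I] in
theorem relations_le_comap_cons (k : I) :
    relations b ≤ (relations b).comap (Finsupp.lmapDomain R R (List.cons k)) := by
  refine Submodule.span_le.2 ?_
  rintro _ ⟨⟨s, j, i, t⟩, rfl⟩
  simp only [SetLike.mem_coe, Submodule.mem_comap, map_sub, map_insertion]
  simpa [Finsupp.mapDomain_single, insertion] using
    single_sub_single_sub_insertion_mem b (k :: s) j i t

omit [LinearOrder I] in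
theorem relations_le_comap_append (k : I) :
    relations b ≤ (relations b).comap (Finsupp.lmapDomain R R (· ++ [k])) := by
  refine Submodule.span_le.2 ?_
  rintro _ ⟨⟨s, j, i, t⟩, rfl⟩
  simp only [SetLike.mem_coe, Submodule.mem_comap, map_sub, map_insertion]
  simpa [Finsupp.mapDomain_single, insertion] using
    single_sub_single_sub_insertion_mem b s j i (t ++ [k])

/-- Left multiplication by a basis element on words modulo the relations. -/
noncomputable def consQ (k : I) : Module.End R ((List I →₀ R) ⧸ relations b) :=
  (relations b).mapQ _ _ (relations_le_comap_cons b k)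

/-- Right multiplication by a basis element on words modulo the relations. -/
noncomputable def appendQ (k : I) : Module.End R ((List I →₀ R) ⧸ relations b) :=
  (relations b).mapQ _ _ (relations_le_comap_append b k)

/-- The normal form of a combination of words modulo the relations. -/
noncomputable def normalForm : ((List I →₀ R) ⧸ relations b) →ₗ[R] List I →₀ R :=
  (relations b).liftQ (Finsupp.linearCombination R (straighten b)) <| by
    refine Submodule.span_le.2 ?_
    rintro _ ⟨⟨s, j, i, t⟩, rfl⟩
    simp only [SetLike.mem_coe, LinearMap.mem_ker, map_sub, map_insertion]
    simp [straighten_sub]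

@[simp]
theorem normalForm_mk_single (w : List I) :
    normalForm b (Submodule.Quotient.mk (Finsupp.single w 1)) = straighten b w :=
  (Submodule.liftQ_apply _ _ _).trans (by simp)

omit [LinearOrder I] in
@[simp]
theorem consQ_mk_single (k : I) (w : List I) (a : R) :
    consQ b k (Submodule.Quotient.mk (Finsupp.single w a)) =
      Submodule.Quotient.mk (Finsupp.single (k :: w) a) := by
  simp [consQ, Finsupp.mapDomain_single]

omit [LinearOrder I] in
@[simp]
theorem appendQ_mk_single (k : I) (w : List I) (a : R) :
    appendQ b k (Submodule.Quotient.mk (Finsupp.single w a)) =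
      Submodule.Quotient.mk (Finsupp.single (w ++ [k]) a) := by
  simp [appendQ, Finsupp.mapDomain_single]

omit [LinearOrder I] in
theorem linearMap_quotient_ext {M : Type*} [AddCommGroup M] [Module R M]
    {f g : ((List I →₀ R) ⧸ relations b) →ₗ[R] M}
    (h : ∀ w, f (Submodule.Quotient.mk (Finsupp.single w 1)) =
      g (Submodule.Quotient.mk (Finsupp.single w 1))) : f = g := by
  refine Submodule.linearMap_qext _ (Finsupp.lhom_ext' fun w => LinearMap.ext_ring ?_)
  exact h w

omit [LinearOrder I] in
theorem consQ_commute_appendQ (k l : I) : Commute (consQ b k) (appendQ b l) :=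
  linearMap_quotient_ext b fun w => by simp

theorem normalForm_appendQ {i₀ : I} (h₀ : ∀ i, i ≤ i₀) (z : (List I →₀ R) ⧸ relations b) :
    normalForm b (appendQ b i₀ z) = (normalForm b z).mapDomain (· ++ [i₀]) := by
  have : normalForm b ∘ₗ appendQ b i₀ =
      Finsupp.lmapDomain R R (· ++ [i₀]) ∘ₗ normalForm b :=
    linearMap_quotient_ext b fun w => by
      simpa using straighten_append_top b h₀ w
  exact LinearMap.congr_fun this z

omit [LinearOrder I] in
theorem constr_consQ_lie (x y : L) :
    b.constr R (consQ b) ⁅x, y⁆ = b.constr R (consQ b) x * b.constr R (consQ b) y -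
      b.constr R (consQ b) y * b.constr R (consQ b) x := by
  let A := b.constr R (consQ b)
  let B := (LinearMap.mul R (Module.End R ((List I →₀ R) ⧸ relations b))).compl₁₂ A A
  have : (LieModule.toEnd R L L : L →ₗ[R] L →ₗ[R] L).compr₂ A + B.flip = B := by
    refine b.ext fun j => b.ext fun i => linearMap_quotient_ext b fun w => ?_
    have h₁ := (Submodule.Quotient.mk_eq_zero _).2
      (single_sub_single_sub_insertion_mem b [] j i w)
    have h₂ : ∀ v : L, A v (Submodule.Quotient.mk (Finsupp.single w 1)) =
        (Submodule.Quotient.mk (insertion b (fun w => Finsupp.single w 1) [] w v) :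
          (List I →₀ R) ⧸ relations b) := by
      intro v
      have : (LinearMap.applyₗ
          (Submodule.Quotient.mk (Finsupp.single w 1) : (List I →₀ R) ⧸ relations b)) ∘ₗ A =
          (relations b).mkQ ∘ₗ insertion b (fun w => Finsupp.single w 1) [] w :=
        b.ext fun k => by simp [A]
      exact LinearMap.congr_fun this v
    rw [Submodule.Quotient.mk_sub, sub_eq_zero] at h₁
    simp [h₂, ← h₁, B]
    simp [A]
  exact eq_sub_of_add_eq (LinearMap.congr_fun₂ this x y)

attribute [local instance] LieRing.ofAssociativeRing

/-- The action of `L` by left multiplication on words modulo the relations. -/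
noncomputable def action : L →ₗ⁅R⁆ Module.End R ((List I →₀ R) ⧸ relations b) where
  toLinearMap := b.constr R (consQ b)
  map_lie' {x y} := constr_consQ_lie b x y

omit [LinearOrder I] in
@[simp]
theorem action_basis (i : I) : action b (b i) = consQ b i :=
  b.constr_basis R _ i

theorem normalForm_action (x : L) :
    normalForm b (action b x (Submodule.Quotient.mk (Finsupp.single [] 1))) =
      (b.repr x).mapDomain fun i => [i] := by
  have : normalForm b ∘ₗ LinearMap.applyₗ
      (Submodule.Quotient.mk (Finsupp.single [] 1) : (List I →₀ R) ⧸ relations b) ∘ₗ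
        (action b).toLinearMap = Finsupp.lmapDomain R R (fun i => [i]) ∘ₗ b.repr := by
    refine b.ext fun i => ?_
    have : straighten b [i] = Finsupp.single [i] 1 := by
      refine straighten_eq_single b fun s j k t _ h => ?_
      have := congrArg List.length h
      simp at this
      omega
    simp [this, Finsupp.mapDomain_single]
  exact LinearMap.congr_fun this x

omit [LinearOrder I] in
theorem lift_action_commute (q : UniversalEnvelopingAlgebra R L) (k : I) :
    Commute (UniversalEnvelopingAlgebra.lift R (action b) q) (appendQ b k) := by
  let S := Subalgebra.centralizer R {appendQ b k}
  have hS : ∀ x, action b x ∈ S := by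
    intro x
    have : (LinearMap.mulRight R (appendQ b k) - LinearMap.mulLeft R (appendQ b k)) ∘ₗ
        (action b).toLinearMap = 0 :=
      b.ext fun i => by simpa [sub_eq_zero] using (consQ_commute_appendQ b i k).eq
    have := LinearMap.congr_fun this x
    rw [Subalgebra.mem_centralizer_iff]
    rintro _ rfl
    exact (sub_eq_zero.1 this).symm
  let ρ : L →ₗ⁅R⁆ S :=
    { toLinearMap := (action b).toLinearMap.codRestrict (Subalgebra.toSubmodule S) hS
      map_lie' := fun {x y} => Subtype.ext (LieHom.map_lie (action b) x y) }
  have : UniversalEnvelopingAlgebra.lift R (action b) =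
      S.val.comp (UniversalEnvelopingAlgebra.lift R ρ) := by
    refine UniversalEnvelopingAlgebra.hom_ext R (LieHom.ext fun x => ?_)
    simp [ρ]
    rfl
  rw [this]
  exact ((Subalgebra.mem_centralizer_iff R).1 (UniversalEnvelopingAlgebra.lift R ρ q).2 _ rfl).symm

/-- Any element of a type is the greatest one for some linear order. -/
theorem exists_linearOrder_forall_le {J : Type*} (i₀ : J) :
    ∃ _ : LinearOrder J, ∀ i, i ≤ i₀ := by
  classical
  let _ : LinearOrder J := linearOrderOfSTO WellOrderingRel
  let f : J → WithTop J := fun i => if i = i₀ then ⊤ else i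
  have hf : Function.Injective f := by
    intro i j hij
    by_cases hi : i = i₀ <;> by_cases hj : j = i₀ <;> simp_all [f]
  refine ⟨LinearOrder.lift' f hf, fun i => ?_⟩
  change f i ≤ f i₀
  simp [f]

end LieStraightening

namespace UniversalEnvelopingAlgebra

attribute [local instance] LieRing.ofAssociativeRing

open LieStraightening Module

variable {K L : Type*} [Field K] [LieRing L] [LieAlgebra K L]

variable (K L) in
theorem ι_injective : Function.Injective (ι K : L → UniversalEnvelopingAlgebra K L) := by
  let b := Basis.ofVectorSpace K L
  classical
  let _ : LinearOrder (Basis.ofVectorSpaceIndex K L) := linearOrderOfSTO WellOrderingRel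
  refine (injective_iff_map_eq_zero (ι K : L →ₗ⁅K⁆ _)).2 fun x hx => ?_
  have h := normalForm_action b x
  rw [← lift_ι_apply K (action b) x, hx] at h
  simp only [map_zero, LinearMap.zero_apply] at h
  have := Finsupp.mapDomain_injective List.singleton_injective
    (h.symm.trans Finsupp.mapDomain_zero.symm)
  simpa using this

/-- The left ideal of the enveloping algebra generated by an element `u` of the Lie algebra meets
the Lie algebra in the multiples of `u`. -/
theorem exists_smul_eq_of_ι_eq_mul_ι {x u : L} {q : UniversalEnvelopingAlgebra K L}
    (h : ι K x = q * ι K u) : ∃ c : K, x = c • u := by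
  classical
  rcases eq_or_ne u 0 with rfl | hu
  · exact ⟨0, by simpa using ι_injective K L (h.trans (by simp) : ι K x = ι K 0)⟩
  have hli : LinearIndepOn K id ({u} : Set L) := LinearIndepOn.singleton hu
  let b := Basis.extend hli
  let i₀ : hli.extend (Set.subset_univ _) := ⟨u, hli.subset_extend _ rfl⟩
  have hb : b i₀ = u := Basis.extend_apply_self hli i₀
  obtain ⟨_, h₀⟩ := exists_linearOrder_forall_le i₀
  refine ⟨b.repr x i₀, b.repr.injective (Finsupp.ext fun i => ?_)⟩
  rcases eq_or_ne i i₀ with rfl | hi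
  · simp [← hb]
  let one : (List (hli.extend (Set.subset_univ _)) →₀ K) ⧸ relations b :=
    Submodule.Quotient.mk (Finsupp.single [] 1)
  have e : action b x one = appendQ b i₀ (lift K (action b) q one) := by
    have hu' : action b u one = appendQ b i₀ one := by
      simp [← hb, one]
    rw [← lift_ι_apply K (action b) x, h, map_mul, lift_ι_apply, Module.End.mul_apply, hu']
    exact LinearMap.congr_fun (lift_action_commute b q i₀).eq one
  have e' := DFunLike.congr_fun ((normalForm_action b x).symm.trans
    ((congrArg (normalForm b) e).trans (normalForm_appendQ b h₀ _))) [i]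
  rw [Finsupp.mapDomain_apply List.singleton_injective, Finsupp.mapDomain_of_notMem_range] at e'
  · simp [e', ← hb, hi]
  · rintro ⟨w, hw⟩
    have := (List.append_inj' (show w ++ [i₀] = [] ++ [i] from hw) rfl).2
    exact hi (List.singleton_inj.1 this).symm

end UniversalEnvelopingAlgebra

namespace FreeAlgebra

open Polynomial

variable {K X : Type*} [Field K]

section leftDeriv

variable [DecidableEq X]

/-- The representation by triangular matrices encoding the left derivative. -/
noncomputable def leftDerivAux (i : X) :
    FreeAlgebra K X →ₐ[K] Matrix (Fin 2) (Fin 2) (FreeAlgebra K X) :=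
  lift K fun j => !![0, if j = i then 1 else 0; 0, ι K j]

theorem leftDerivAux_apply (i : X) (a : FreeAlgebra K X) :
    leftDerivAux i a 0 0 = algebraMap K _ (algebraMapInv a) ∧
      leftDerivAux i a 1 0 = 0 ∧ leftDerivAux i a 1 1 = a := by
  induction a with
  | grade0 r => simp [Matrix.algebraMap_matrix_apply]
  | grade1 j => simp [leftDerivAux, algebraMapInv]
  | add a c ha hc => simp [ha, hc]
  | mul a c ha hc => simp [Matrix.mul_apply, ha, hc]

/-- The `K`-linear map sending `x_i * a` to `a`, and killing the words which do not start with
`x_i`. -/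
noncomputable def leftDeriv (i : X) : FreeAlgebra K X →ₗ[K] FreeAlgebra K X :=
  Matrix.entryLinearMap K _ 0 1 ∘ₗ (leftDerivAux i).toLinearMap

@[simp]
theorem leftDeriv_mul (i : X) (a c : FreeAlgebra K X) :
    leftDeriv i (a * c) = leftDeriv i a * c + algebraMapInv a • leftDeriv i c := by
  simp only [leftDeriv, LinearMap.comp_apply, AlgHom.toLinearMap_apply, map_mul,
    Matrix.entryLinearMap_apply]
  rw [Matrix.mul_apply, Fin.sum_univ_two, (leftDerivAux_apply i a).1,
    (leftDerivAux_apply i c).2.2, Algebra.smul_def, add_comm]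

@[simp]
theorem leftDeriv_ι (i j : X) : leftDeriv i (ι K j) = if j = i then 1 else 0 := by
  simp [leftDeriv, leftDerivAux]

@[simp]
theorem leftDeriv_algebraMap (i : X) (r : K) :
    leftDeriv i (algebraMap K (FreeAlgebra K X) r) = 0 := by
  simp [leftDeriv, Matrix.algebraMap_matrix_apply]

omit [DecidableEq X] in
@[simp]
theorem algebraMapInv_ι (i : X) : algebraMapInv (ι K i) = 0 := by
  simp [algebraMapInv]

theorem eq_add_sum_ι_mul_leftDeriv [Fintype X] (a : FreeAlgebra K X) :
    a = algebraMap K _ (algebraMapInv a) + ∑ i, ι K i * leftDeriv i a := by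
  induction a with
  | grade0 r => simp
  | grade1 j => simp
  | add a c ha hc =>
    conv_lhs => rw [ha, hc]
    simp only [map_add, mul_add, Finset.sum_add_distrib]
    abel
  | mul a c ha hc =>
    conv_lhs => rw [ha, add_mul, Finset.sum_mul]
    conv_lhs => enter [1, 2]; rw [hc]
    simp only [map_mul, mul_add, Finset.sum_add_distrib, leftDeriv_mul, Finset.mul_sum,
      mul_assoc, Algebra.smul_def, Algebra.left_comm]
    abel

end leftDeriv

theorem exists_eq_add_sum_mul_ι [Fintype X] (a : FreeAlgebra K X) :
    ∃ r : X → FreeAlgebra K X, a = algebraMap K _ (algebraMapInv a) + ∑ i, r i * ι K i := by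
  classical
  induction a with
  | grade0 r => exact ⟨0, by simp⟩
  | grade1 j => exact ⟨Pi.single j 1, by simp [Pi.single_apply]⟩
  | add a c ha hc =>
    obtain ⟨r, hr⟩ := ha
    obtain ⟨s, hs⟩ := hc
    refine ⟨r + s, ?_⟩
    conv_lhs => rw [hr, hs]
    simp only [map_add, Pi.add_apply, add_mul, Finset.sum_add_distrib]
    abel
  | mul a c ha hc =>
    obtain ⟨r, hr⟩ := ha
    obtain ⟨s, hs⟩ := hc
    refine ⟨fun i => algebraMap K _ (algebraMapInv c) * r i + a * s i, ?_⟩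
    conv_lhs => rw [hs, mul_add, ← Algebra.commutes]
    conv_lhs => enter [1, 2]; rw [hr]
    simp only [map_mul, mul_add, add_mul, Finset.sum_add_distrib, Finset.mul_sum, mul_assoc]
    rw [Algebra.commutes (algebraMapInv c) (algebraMap K _ (algebraMapInv a)), add_assoc]

/-- The homomorphism multiplying the homogeneous elements of degree `n` by `t ^ n`. -/
noncomputable def grading : FreeAlgebra K X →ₐ[K] (FreeAlgebra K X)[X] :=
  lift K fun i => C (ι K i) * Polynomial.X

@[simp]
theorem grading_ι (i : X) : grading (ι K i) = C (ι K i) * Polynomial.X := by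
  simp [grading]

theorem eval_one_grading (a : FreeAlgebra K X) : (grading a).eval 1 = a := by
  induction a with
  | grade0 r => simp [Polynomial.algebraMap_apply]
  | grade1 j => simp
  | add a c ha hc => simp [ha, hc]
  | mul a c ha hc =>
    rw [map_mul, Polynomial.eval, eval₂_mul_noncomm _ _ fun _ => Commute.one_right _]
    exact congrArg₂ _ ha hc

theorem grading_injective : Function.Injective (grading : FreeAlgebra K X → _) :=
  Function.LeftInverse.injective (g := eval 1) eval_one_grading

section component

variable [Fintype X] [DecidableEq X]

theorem grading_eq (a : FreeAlgebra K X) :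
    grading a = C (algebraMap K _ (algebraMapInv a)) +
      ∑ i, C (ι K i) * grading (leftDeriv i a) * Polynomial.X := by
  conv_lhs => rw [eq_add_sum_ι_mul_leftDeriv a]
  simp [Polynomial.algebraMap_apply, mul_assoc, X_mul]

theorem coeff_grading_zero (a : FreeAlgebra K X) :
    (grading a).coeff 0 = algebraMap K _ (algebraMapInv a) := by
  rw [grading_eq]
  simp

theorem coeff_grading_succ (a : FreeAlgebra K X) (n : ℕ) :
    (grading a).coeff (n + 1) = ∑ i, ι K i * (grading (leftDeriv i a)).coeff n := by
  rw [grading_eq]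
  simp

theorem algebraMapInv_coeff_grading_succ (a : FreeAlgebra K X) (n : ℕ) :
    algebraMapInv ((grading a).coeff (n + 1)) = 0 := by
  simp [coeff_grading_succ]

theorem leftDeriv_coeff_grading_succ (i : X) (a : FreeAlgebra K X) (n : ℕ) :
    leftDeriv i ((grading a).coeff (n + 1)) = (grading (leftDeriv i a)).coeff n := by
  simp [coeff_grading_succ]

theorem grading_coeff_grading (a : FreeAlgebra K X) (n : ℕ) :
    grading ((grading a).coeff n) = monomial n ((grading a).coeff n) := by
  induction n generalizing a with
  | zero => simp [coeff_grading_zero, Polynomial.algebraMap_apply]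
  | succ n ih =>
    rw [coeff_grading_succ, map_sum, map_sum]
    refine Finset.sum_congr rfl fun i _ => ?_
    rw [map_mul, ih, grading_ι, mul_assoc, X_mul_monomial, C_mul_monomial]

/-- The weak algorithm for a relation with two homogeneous coefficients. -/
theorem exists_eq_mul_of_coeff_mul_add_coeff_mul_eq_zero {k j : ℕ} (hkj : k ≤ j)
    {a c u v : FreeAlgebra K X} (hc : (grading c).coeff k ≠ 0)
    (h : (grading a).coeff j * u + (grading c).coeff k * v = 0) :
    ∃ q, v = q * u := by
  induction k generalizing j a c with
  | zero =>
    rw [coeff_grading_zero] at h hc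
    have hc' : algebraMapInv c ≠ 0 := fun h0 => hc (by simp [h0])
    refine ⟨(-(algebraMapInv c)⁻¹) • (grading a).coeff j, ?_⟩
    rw [← Algebra.smul_def, add_comm, add_eq_zero_iff_eq_neg] at h
    rw [smul_mul_assoc, neg_smul, ← smul_neg, ← h, smul_smul, inv_mul_cancel₀ hc', one_smul]
  | succ k ih =>
    obtain ⟨j, rfl⟩ := Nat.exists_eq_add_of_le' hkj
    obtain ⟨i, hi⟩ : ∃ i, (grading (leftDeriv i c)).coeff k ≠ 0 := by
      by_contra! h0
      exact hc (by simp [coeff_grading_succ, h0])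
    refine ih (j := j + k) (by omega) hi (a := leftDeriv i a) ?_
    have := congrArg (leftDeriv i) h
    rw [← add_assoc] at this
    simpa [leftDeriv_coeff_grading_succ, algebraMapInv_coeff_grading_succ] using this

end component

end FreeAlgebra

namespace FreeLieAlgebra

open Polynomial FreeAlgebra

variable {K X : Type*} [Field K]

attribute [local instance] LieRing.ofAssociativeRing

variable (K X) in
/-- The canonical map from the free Lie algebra to the free associative algebra. -/
noncomputable def toFreeAlgebra : FreeLieAlgebra K X →ₗ⁅K⁆ FreeAlgebra K X :=
  lift K (FreeAlgebra.ι K)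

@[simp]
theorem toFreeAlgebra_of (i : X) : toFreeAlgebra K X (of K i) = FreeAlgebra.ι K i :=
  lift_of_apply _ _

theorem universalEnvelopingEquivFreeAlgebra_ι (x : FreeLieAlgebra K X) :
    universalEnvelopingEquivFreeAlgebra K X (UniversalEnvelopingAlgebra.ι K x) =
      toFreeAlgebra K X x :=
  UniversalEnvelopingAlgebra.lift_ι_apply K _ x

theorem toFreeAlgebra_injective : Function.Injective (toFreeAlgebra K X) := fun x y h => by
  rw [← universalEnvelopingEquivFreeAlgebra_ι, ← universalEnvelopingEquivFreeAlgebra_ι] at h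
  exact UniversalEnvelopingAlgebra.ι_injective K _ (AlgEquiv.injective _ h)

theorem exists_smul_eq_of_toFreeAlgebra_eq_mul {x u : FreeLieAlgebra K X} {q : FreeAlgebra K X}
    (h : toFreeAlgebra K X x = q * toFreeAlgebra K X u) : ∃ c : K, x = c • u := by
  refine UniversalEnvelopingAlgebra.exists_smul_eq_of_ι_eq_mul_ι
    (q := (universalEnvelopingEquivFreeAlgebra K X).symm q)
    ((universalEnvelopingEquivFreeAlgebra K X).injective ?_)
  rw [map_mul, AlgEquiv.apply_symm_apply, universalEnvelopingEquivFreeAlgebra_ι,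
    universalEnvelopingEquivFreeAlgebra_ι, h]

theorem mem_of_forall_of_mem (S : LieSubalgebra K (FreeLieAlgebra K X)) (h : ∀ i, of K i ∈ S)
    (x : FreeLieAlgebra K X) : x ∈ S := by
  have : S.incl.comp (lift K fun i => (⟨of K i, h i⟩ : S)) = LieHom.id := by
    ext i
    simp
  rw [← LieHom.id_apply (R := K) x, ← this]
  exact (lift K fun i => (⟨of K i, h i⟩ : S)) x |>.2

theorem algebraMapInv_toFreeAlgebra (x : FreeLieAlgebra K X) :
    algebraMapInv (toFreeAlgebra K X x) = 0 := by
  let S : LieSubalgebra K (FreeLieAlgebra K X) :=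
    { LinearMap.ker (algebraMapInv.toLinearMap ∘ₗ (toFreeAlgebra K X).toLinearMap) with
      lie_mem' := fun {x y} _ _ => by
        simp [LieRing.of_associative_ring_bracket, mul_comm] }
  exact mem_of_forall_of_mem S (fun i => by simp [S]) x

/-- The homogeneous components of a Lie element are Lie elements. -/
theorem exists_toFreeAlgebra_eq_coeff_grading (x : FreeLieAlgebra K X) (n : ℕ) :
    ∃ y, toFreeAlgebra K X y = (grading (toFreeAlgebra K X x)).coeff n := by
  let S : LieSubalgebra K (FreeLieAlgebra K X) :=
    { carrier := {x | ∀ n, (grading (toFreeAlgebra K X x)).coeff n ∈ (toFreeAlgebra K X).range}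
      zero_mem' := fun n => by simp
      add_mem' := fun {x y} hx hy n => by
        simpa only [map_add, coeff_add] using add_mem (hx n) (hy n)
      smul_mem' := fun c x hx n => by
        simpa only [map_smul, coeff_smul] using SMulMemClass.smul_mem c (hx n)
      lie_mem' := fun {x y} hx hy n => by
        rw [LieHom.map_lie, LieRing.of_associative_ring_bracket, map_sub, map_mul, map_mul,
          coeff_sub, coeff_mul, coeff_mul, ← Finset.Nat.sum_antidiagonal_swap,
          ← Finset.sum_sub_distrib]
        refine sum_mem fun p _ => ?_
        rw [Prod.fst_swap, Prod.snd_swap, ← LieRing.of_associative_ring_bracket]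
        exact LieSubalgebra.lie_mem _ (hx _) (hy _) }
  refine mem_of_forall_of_mem S (fun i n => ?_) x n
  rw [toFreeAlgebra_of, grading_ι, coeff_C_mul, coeff_X]
  split_ifs
  · exact ⟨of K i, by simp⟩
  · simp

section Rank2

variable {u v : FreeLieAlgebra K (Fin 2)}

local notation "κ" => toFreeAlgebra K (Fin 2)

theorem not_forall_exists_ι_eq_mul (u : FreeLieAlgebra K (Fin 2)) :
    ¬ ∀ i, ∃ p : FreeAlgebra K (Fin 2), FreeAlgebra.ι K i = p * κ u := by
  intro h
  obtain ⟨p, hp⟩ := h 0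
  obtain ⟨r, hr⟩ := h 1
  have key : ∀ (i j : Fin 2) (p : FreeAlgebra K (Fin 2)), FreeAlgebra.ι K j = p * κ u →
      (if j = i then 1 else 0) = algebraMapInv p * algebraMapInv (leftDeriv i (κ u)) := by
    intro i j p hp
    have := congrArg (fun a => algebraMapInv (leftDeriv i a)) hp
    simpa [algebraMapInv_toFreeAlgebra, apply_ite algebraMapInv] using this
  have h₁ := key 0 0 p hp
  have h₂ := key 0 1 r hr
  have h₃ := key 1 1 r hr
  rw [if_pos rfl] at h₁ h₃
  rw [if_neg (by decide), zero_eq_mul] at h₂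
  rcases h₂ with h₂ | h₂
  · simp [h₂] at h₃
  · simp [h₂] at h₁

theorem mem_span_of_natDegree_le_one (h : (grading (κ u)).natDegree ≤ 1) :
    u ∈ Submodule.span K {of K (0 : Fin 2), of K (1 : Fin 2)} := by
  have h₁ := eval_one_grading (κ u)
  rw [eval_eq_sum_range' (Nat.lt_succ_of_le h), Finset.sum_range_succ, Finset.sum_range_one,
    coeff_grading_zero, algebraMapInv_toFreeAlgebra, coeff_grading_succ, Fin.sum_univ_two,
    coeff_grading_zero, coeff_grading_zero] at h₁
  refine Submodule.mem_span_pair.2 ⟨algebraMapInv (leftDeriv 0 (κ u)),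
    algebraMapInv (leftDeriv 1 (κ u)), toFreeAlgebra_injective ?_⟩
  conv_rhs => rw [← h₁]
  simp [Algebra.smul_def, Algebra.commutes]

/-- If two Lie elements generate the augmentation ideal as a left ideal and one of them is not
linear, then their leading components are proportional. -/
theorem exists_natDegree_sub_smul_lt
    (h : ∀ i, ∃ p q : FreeAlgebra K (Fin 2), FreeAlgebra.ι K i = p * κ u + q * κ v)
    (huv : (grading (κ u)).natDegree ≤ (grading (κ v)).natDegree)
    (hv : 1 < (grading (κ v)).natDegree) :
    ∃ c : K, (grading (κ (v - c • u))).natDegree < (grading (κ v)).natDegree := by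
  obtain ⟨i, p, q, hi, hq⟩ : ∃ i, ∃ p q : FreeAlgebra K (Fin 2),
      FreeAlgebra.ι K i = p * κ u + q * κ v ∧ q ≠ 0 := by
    by_contra! H
    refine not_forall_exists_ι_eq_mul u fun i => ?_
    obtain ⟨p, q, hi⟩ := h i
    exact ⟨p, by rw [hi, H i p q hi, zero_mul, add_zero]⟩
  have hv0 : grading (κ v) ≠ 0 := by
    rintro h0
    simp [h0] at hv
  have hq0 : grading q ≠ 0 := (map_ne_zero_iff _ grading_injective).2 hq
  have hi' := congrArg grading hi
  rw [grading_ι, map_add, map_mul, map_mul] at hi'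
  have hdeg : (grading p * grading (κ u)).natDegree = (grading q * grading (κ v)).natDegree := by
    have h1 : (C (FreeAlgebra.ι K i) * Polynomial.X : (FreeAlgebra K (Fin 2))[X]).natDegree ≤ 1 :=
      ((natDegree_C_mul_le _ _).trans natDegree_X_le)
    rw [hi'] at h1
    have h2 : 1 < (grading q * grading (κ v)).natDegree := by
      rw [natDegree_mul hq0 hv0]
      omega
    rcases lt_trichotomy (grading p * grading (κ u)).natDegree
      (grading q * grading (κ v)).natDegree with hlt | heq | hgt
    · rw [natDegree_add_eq_right_of_natDegree_lt hlt] at h1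
      omega
    · exact heq
    · rw [natDegree_add_eq_left_of_natDegree_lt hgt] at h1
      omega
  have hpu : grading p * grading (κ u) ≠ 0 := by
    intro h0
    rw [h0, natDegree_zero, natDegree_mul hq0 hv0] at hdeg
    omega
  have hsum : (grading p).leadingCoeff * (grading (κ u)).leadingCoeff +
      (grading q).leadingCoeff * (grading (κ v)).leadingCoeff = 0 := by
    have := congrArg (fun f => f.coeff (grading q * grading (κ v)).natDegree) hi'
    simp only [coeff_add] at this
    rw [← leadingCoeff_mul, ← leadingCoeff_mul, leadingCoeff, leadingCoeff, hdeg, ← this,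
      coeff_C_mul, coeff_X_of_ne_one, mul_zero]
    rw [natDegree_mul hq0 hv0]
    omega
  rw [natDegree_mul (left_ne_zero_of_mul hpu) (right_ne_zero_of_mul hpu),
    natDegree_mul hq0 hv0] at hdeg
  obtain ⟨c', hc'⟩ := exists_eq_mul_of_coeff_mul_add_coeff_mul_eq_zero
    (k := (grading q).natDegree) (j := (grading p).natDegree) (by omega)
    (leadingCoeff_ne_zero.2 hq0) hsum
  obtain ⟨u', hu'⟩ := exists_toFreeAlgebra_eq_coeff_grading u (grading (κ u)).natDegree
  obtain ⟨v', hv'⟩ := exists_toFreeAlgebra_eq_coeff_grading v (grading (κ v)).natDegree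
  rw [leadingCoeff, leadingCoeff, ← hu', ← hv'] at hc'
  obtain ⟨c, rfl⟩ := exists_smul_eq_of_toFreeAlgebra_eq_mul hc'
  rw [map_smul, hu'] at hv'
  have hmn : (grading (κ u)).natDegree = (grading (κ v)).natDegree := by
    by_contra hne
    have := grading_coeff_grading (κ v) (grading (κ v)).natDegree
    rw [← hv', map_smul, grading_coeff_grading] at this
    have := congrArg (fun f => f.coeff (grading (κ v)).natDegree) this
    simp only [coeff_smul, coeff_monomial, if_neg hne, if_pos, smul_zero] at this
    rw [hv'] at this
    exact leadingCoeff_ne_zero.2 hv0 this.symm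
  refine ⟨c, ?_⟩
  have hle : (grading (κ (v - c • u))).natDegree ≤ (grading (κ v)).natDegree := by
    rw [map_sub, map_smul, map_sub, map_smul]
    exact (natDegree_sub_le _ _).trans
      (max_le le_rfl ((natDegree_smul_le _ _).trans hmn.le))
  refine hle.lt_of_ne fun heq => ?_
  have h0 : (grading (κ (v - c • u))).coeff (grading (κ (v - c • u))).natDegree = 0 := by
    rw [heq, map_sub, map_smul, map_sub, map_smul, coeff_sub, coeff_smul, ← hv', hmn, sub_self]
  have h1 := leadingCoeff_eq_zero.1 h0
  rw [h1, natDegree_zero] at heq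
  omega

theorem mem_span_of_forall_ι_eq
    (h : ∀ i, ∃ p q : FreeAlgebra K (Fin 2), FreeAlgebra.ι K i = p * κ u + q * κ v) :
    u ∈ Submodule.span K {of K (0 : Fin 2), of K (1 : Fin 2)} ∧
      v ∈ Submodule.span K {of K (0 : Fin 2), of K (1 : Fin 2)} := by
  induction hN : (grading (κ u)).natDegree + (grading (κ v)).natDegree
    using Nat.strong_induction_on generalizing u v with
  | _ N ih =>
    wlog huv : (grading (κ u)).natDegree ≤ (grading (κ v)).natDegree generalizing u v
    · refine (this (fun i => ?_) (by omega) (by omega)).symm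
      obtain ⟨p, q, hi⟩ := h i
      exact ⟨q, p, by rw [hi, add_comm]⟩
    by_cases hv : (grading (κ v)).natDegree ≤ 1
    · exact ⟨mem_span_of_natDegree_le_one (huv.trans hv), mem_span_of_natDegree_le_one hv⟩
    · obtain ⟨c, hc⟩ := exists_natDegree_sub_smul_lt h huv (not_le.1 hv)
      obtain ⟨hu, hvu⟩ := ih _ (by omega) (u := u) (v := v - c • u) (fun i => by
        obtain ⟨p, q, hi⟩ := h i
        refine ⟨p + c • q, q, ?_⟩
        rw [hi, map_sub, map_smul, add_mul, mul_sub, smul_mul_assoc, mul_smul_comm]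
        abel) rfl
      exact ⟨hu, by simpa using add_mem hvu (Submodule.smul_mem _ c hu)⟩

theorem equiv_apply_of_mem_span (e : FreeLieAlgebra K (Fin 2) ≃ₗ⁅K⁆ FreeLieAlgebra K (Fin 2))
    (i : Fin 2) : e (of K i) ∈ Submodule.span K {of K (0 : Fin 2), of K (1 : Fin 2)} := by
  let E : FreeAlgebra K (Fin 2) →ₐ[K] FreeAlgebra K (Fin 2) :=
    FreeAlgebra.lift K fun j => κ (e (of K j))
  have hE : ∀ x, E (κ x) = κ (e x) := by
    have : (E : FreeAlgebra K (Fin 2) →ₗ⁅K⁆ FreeAlgebra K (Fin 2)).comp κ =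
        (κ).comp (e : FreeLieAlgebra K (Fin 2) →ₗ⁅K⁆ FreeLieAlgebra K (Fin 2)) := by
      ext j
      simp [E]
    exact LieHom.congr_fun this
  have := mem_span_of_forall_ι_eq (u := e (of K 0)) (v := e (of K 1)) fun j => by
    obtain ⟨r, hr⟩ := exists_eq_add_sum_mul_ι (κ (e.symm (of K j)))
    refine ⟨E (r 0), E (r 1), ?_⟩
    have h := congrArg E hr
    rw [algebraMapInv_toFreeAlgebra, hE, e.apply_symm_apply, toFreeAlgebra_of,
      Fin.sum_univ_two] at h
    simpa [E] using h
  fin_cases i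
  exacts [this.1, this.2]

end Rank2

end FreeLieAlgebra

theorem LieSubalgebra.coe_lieSpan_singleton {R L : Type*} [CommRing R] [LieRing L]
    [LieAlgebra R L] (x : L) :
    (LieSubalgebra.lieSpan R L {x} : Set L) = (Submodule.span R {x} : Set L) := by
  let S : LieSubalgebra R L :=
    { Submodule.span R {x} with
      lie_mem' := fun {y z} hy hz => by
        obtain ⟨a, rfl⟩ := Submodule.mem_span_singleton.1 hy
        obtain ⟨c, rfl⟩ := Submodule.mem_span_singleton.1 hz
        simp }
  refine Set.Subset.antisymm ?_ LieSubalgebra.submodule_span_le_lieSpan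
  exact LieSubalgebra.lieSpan_le (K := S) |>.2
    (Set.singleton_subset_iff.2 (Submodule.mem_span_singleton_self x))

/-- In the free Lie algebra on two generators over a field `K`, the subalgebra generated
by a single degree-one element `x` reduces to its scalar multiples (so all homogeneous
components of degree `≥ 2` of elements of this subalgebra vanish); consequently every
automorphism of the free Lie algebra of rank `2` is linear: it maps the generators into
the linear span of the generators. -/
theorem stmt_19 (K : Type*) [Field K] :
    (∀ x ∈ Submodule.span K
        {FreeLieAlgebra.of K (0 : Fin 2), FreeLieAlgebra.of K (1 : Fin 2)},
      (LieSubalgebra.lieSpan K (FreeLieAlgebra K (Fin 2)) {x} : Set (FreeLieAlgebra K (Fin 2)))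
        = (Submodule.span K {x} : Set (FreeLieAlgebra K (Fin 2)))) ∧
    (∀ e : FreeLieAlgebra K (Fin 2) ≃ₗ⁅K⁆ FreeLieAlgebra K (Fin 2), ∀ i : Fin 2,
      e (FreeLieAlgebra.of K i) ∈ Submodule.span K
        {FreeLieAlgebra.of K (0 : Fin 2), FreeLieAlgebra.of K (1 : Fin 2)}) := by
  exact ⟨fun x _ => LieSubalgebra.coe_lieSpan_singleton x,
    FreeLieAlgebra.equiv_apply_of_mem_span⟩
end
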